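/- arXiv:2506.14091 — 4 statements merged into one kernel-verified Lean document; each statement's English description precedes it below -/
import Mathlib

section
/- Let A, B : [0,T] → ℝ be continuous, C² on [0,T), such that {A, B} forms an ET-system with accuracy one on [0,T) and satisfies (D.1) with E = [0,T): there exists (λ, μ) ≠ (0,0) with λA + μB of constant sign (≥ 0 or ≤ 0) on [0,T). If ∫₀ᵀ B(t) dt = 0 and ∫₀ᵀ A(t) dt ≠ 0, then the Abel equation x' = A(t)x³ + B(t)x² has no limit cycles in the region x ≠ 0; that is, x = 0 is its unique limit cycle. -/
/-!
Every closed solution of the equation starts at `0`; both claims follow at once.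

Hypothesis (D.1) gives `(l, m) ≠ (0, 0)` with `l A + m B` of constant sign. If `l = 0`, then `B` has
constant sign and integral `0`, so it vanishes, against linear independence. Otherwise, after
division by `l`, the function `C = A + μ B` has constant sign on `[0,T]`, and the equation reads
`x' = C x³ + B x² (1 - μ x)`. Let `x` be a closed solution with `x 0 ≠ 0`.

* `x` never vanishes, because `x' = (A x² + B x) x` is linear in `x`; so `x` has constant sign.
* `y = 1 - μ x` satisfies `y' = -μ B x² y - μ x³ C`, a linear equation whose forcing term has
  constant sign. If the closed function `y` vanished somewhere, the forcing term would vanish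
  identically (`eq_zero_of_linear`), hence so would `C` (`μ ≠ 0` as `y` has a zero).
* If `y` does not vanish, then `-1/x + μ log |x / (1 - μ x)| - ∫ B` has derivative
  `C x / (1 - μ x)`, of constant sign, and takes equal values at `0` and `T` because `∫ B = 0`.
  So `C` vanishes identically.

In each case `C = A + μ B = 0`, which contradicts the linear independence of `A` and `B`.
-/

open Set intervalIntegral

noncomputable section

/-- `x` is a solution of the Abel equation `x' = A(t) x^3 + B(t) x^2` on `[0,T]`. -/
def AbelSol (A B : ℝ → ℝ) (T : ℝ) (x : ℝ → ℝ) : Prop :=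
  ∀ t ∈ Set.Icc (0:ℝ) T,
    HasDerivWithinAt x (A t * x t ^ 3 + B t * x t ^ 2) (Set.Icc (0:ℝ) T) t

/-- A closed solution of the Abel equation on `[0,T]`. -/
def ClosedSol (A B : ℝ → ℝ) (T : ℝ) (x : ℝ → ℝ) : Prop :=
  AbelSol A B T x ∧ x 0 = x T

/-- A limit cycle: an isolated closed solution (isolated among initial values of
closed solutions). -/
def LimitCycle (A B : ℝ → ℝ) (T : ℝ) (x : ℝ → ℝ) : Prop :=
  ClosedSol A B T x ∧
    ∃ ε > (0:ℝ), ∀ y : ℝ → ℝ, ClosedSol A B T y → |y 0 - x 0| < ε → y 0 = x 0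

/-- The set of initial values of limit cycles of the Abel equation. -/
def LCInits (A B : ℝ → ℝ) (T : ℝ) : Set ℝ :=
  {v | ∃ x : ℝ → ℝ, LimitCycle A B T x ∧ x 0 = v}

/-- `g` has a zero of multiplicity at least `m` at `t` (derivatives taken within `E`). -/
def ZeroOrderGe (E : Set ℝ) (g : ℝ → ℝ) (t : ℝ) (m : ℕ) : Prop :=
  ∀ k < m, iteratedDerivWithin k g E t = 0

/-- `g` has at most `n` zeros on `E`, counted with multiplicities. -/
def AtMostZerosOn (E : Set ℝ) (g : ℝ → ℝ) (n : ℕ) : Prop :=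
  ∀ (S : Finset ℝ) (m : ℝ → ℕ),
    (∀ t ∈ S, t ∈ E ∧ 1 ≤ m t ∧ ZeroOrderGe E g t (m t)) →
      (∑ t ∈ S, m t) ≤ n

/-- `{f₀, f₁, f₂}` is an ET-system on `E`: linearly independent on `E`, and every
nontrivial linear combination has at most two zeros on `E` counted with multiplicities. -/
def IsETSystem3 (E : Set ℝ) (f₀ f₁ f₂ : ℝ → ℝ) : Prop :=
  (∀ a b c : ℝ, (∀ t ∈ E, a * f₀ t + b * f₁ t + c * f₂ t = 0) → a = 0 ∧ b = 0 ∧ c = 0) ∧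
  ∀ a b c : ℝ, ¬(a = 0 ∧ b = 0 ∧ c = 0) →
    AtMostZerosOn E (fun t => a * f₀ t + b * f₁ t + c * f₂ t) 2

/-- `{A, B}` is an ET-system with accuracy one on `E`: linearly independent on `E`, and
every nontrivial linear combination has at most two zeros on `E` counted with
multiplicities. -/
def IsETAcc1 (E : Set ℝ) (A B : ℝ → ℝ) : Prop :=
  (∀ l m : ℝ, (∀ t ∈ E, l * A t + m * B t = 0) → l = 0 ∧ m = 0) ∧
  ∀ l m : ℝ, ¬(l = 0 ∧ m = 0) → AtMostZerosOn E (fun t => l * A t + m * B t) 2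

/-- `P` is a Poincaré (time-`T`) map of the Abel equation on the set `U` of initial
values. -/
def IsPoincareOn (A B : ℝ → ℝ) (T : ℝ) (P : ℝ → ℝ) (U : Set ℝ) : Prop :=
  ∀ y ∈ U, ∃ z : ℝ → ℝ, AbelSol A B T z ∧ z 0 = y ∧ z T = P y

/-- `q` does not change sign on `s`. -/
def ConstSign (q : ℝ → ℝ) (s : Set ℝ) : Prop :=
  (∀ t ∈ s, 0 ≤ q t) ∨ (∀ t ∈ s, q t ≤ 0)

lemma ConstSign.mul {q r : ℝ → ℝ} {s : Set ℝ} (hq : ConstSign q s) (hr : ConstSign r s) :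
    ConstSign (fun t => q t * r t) s := by
  rcases hq with hq | hq <;> rcases hr with hr | hr
  · exact Or.inl fun t ht => mul_nonneg (hq t ht) (hr t ht)
  · exact Or.inr fun t ht => mul_nonpos_of_nonneg_of_nonpos (hq t ht) (hr t ht)
  · exact Or.inr fun t ht => mul_nonpos_of_nonpos_of_nonneg (hq t ht) (hr t ht)
  · exact Or.inl fun t ht => mul_nonneg_of_nonpos_of_nonpos (hq t ht) (hr t ht)

lemma constSign_const (c : ℝ) (s : Set ℝ) : ConstSign (fun _ => c) s := by
  rcases le_total 0 c with h | h
  · exact Or.inl fun _ _ => h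
  · exact Or.inr fun _ _ => h

lemma ConstSign.inv {q : ℝ → ℝ} {s : Set ℝ} (hq : ConstSign q s) :
    ConstSign (fun t => (q t)⁻¹) s := by
  rcases hq with hq | hq
  · exact Or.inl fun t ht => inv_nonneg.2 (hq t ht)
  · exact Or.inr fun t ht => inv_nonpos.2 (hq t ht)

lemma constSign_of_ne_zero {T : ℝ} {f : ℝ → ℝ} (hf : ContinuousOn f (Icc 0 T))
    (h0 : ∀ t ∈ Icc 0 T, f t ≠ 0) : ConstSign f (Icc 0 T) := by
  by_contra h
  simp only [ConstSign, not_or, not_forall, not_le] at h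
  obtain ⟨⟨a, ha, hfa⟩, b, hb, hfb⟩ := h
  obtain ⟨c, hc, hfc⟩ := isPreconnected_Icc.intermediate_value ha hb hf ⟨hfa.le, hfb.le⟩
  exact h0 c hc hfc

lemma monotoneOn_of_hasDerivWithin {T : ℝ} {f q : ℝ → ℝ}
    (hf : ∀ t ∈ Icc 0 T, HasDerivWithinAt f (q t) (Icc 0 T) t)
    (hq : ∀ t ∈ Icc 0 T, 0 ≤ q t) : MonotoneOn f (Icc 0 T) := by
  refine monotoneOn_of_hasDerivWithinAt_nonneg (f' := q) (convex_Icc 0 T)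
    (fun t ht => (hf t ht).continuousWithinAt) ?_ ?_
  · exact fun t ht => (hf t (interior_subset ht)).mono interior_subset
  · exact fun t ht => hq t (interior_subset ht)

lemma deriv_eq_zero_of_nonneg {T : ℝ} (hT : 0 < T) {f q : ℝ → ℝ}
    (hf : ∀ t ∈ Icc 0 T, HasDerivWithinAt f (q t) (Icc 0 T) t)
    (hq : ∀ t ∈ Icc 0 T, 0 ≤ q t) (h : f 0 = f T) : ∀ t ∈ Icc 0 T, q t = 0 := by
  intro t ht
  have hm := monotoneOn_of_hasDerivWithin hf hq
  have hc : ∀ s ∈ Icc 0 T, f s = f 0 := fun s hs => le_antisymm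
    ((hm hs (right_mem_Icc.2 hT.le) hs.2).trans h.ge) (hm (left_mem_Icc.2 hT.le) hs hs.1)
  have h1 : HasDerivWithinAt f 0 (Icc 0 T) t :=
    (hasDerivWithinAt_const t (Icc 0 T) (f 0)).congr hc (hc t ht)
  exact (uniqueDiffOn_Icc hT t ht).eq_deriv _ (hf t ht) h1

/-- A function with equal values at the endpoints whose derivative has constant sign is constant. -/
lemma deriv_eq_zero_of_constSign {T : ℝ} (hT : 0 < T) {f q : ℝ → ℝ}
    (hf : ∀ t ∈ Icc 0 T, HasDerivWithinAt f (q t) (Icc 0 T) t)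
    (hq : ConstSign q (Icc 0 T)) (h : f 0 = f T) : ∀ t ∈ Icc 0 T, q t = 0 := by
  rcases hq with hq | hq
  · exact deriv_eq_zero_of_nonneg hT hf hq h
  · intro t ht
    have := deriv_eq_zero_of_nonneg hT (f := fun t => -f t) (q := fun t => -q t)
      (fun t ht => (hf t ht).neg) (fun t ht => neg_nonneg.2 (hq t ht)) (by simp [h]) t ht
    simpa using this

lemma exists_antideriv {T : ℝ} (hT : 0 < T) {p : ℝ → ℝ} (hp : ContinuousOn p (Icc 0 T)) :
    ∃ P : ℝ → ℝ, (∀ t ∈ Icc 0 T, HasDerivWithinAt P (p t) (Icc 0 T) t) ∧ P 0 = 0 ∧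
      P T = ∫ t in (0:ℝ)..T, p t := by
  have hc : Continuous (IccExtend hT.le ((Icc 0 T).domRestrict p)) :=
    (continuousOn_iff_continuous_domRestrict.1 hp).Icc_extend'
  have he : ∀ t ∈ Icc 0 T, IccExtend hT.le ((Icc 0 T).domRestrict p) t = p t := fun t ht => by
    rw [IccExtend_of_mem _ _ ht]; rfl
  refine ⟨fun t => ∫ s in (0:ℝ)..t, IccExtend hT.le ((Icc 0 T).domRestrict p) s, ?_, by simp, ?_⟩
  · intro t ht
    rw [← he t ht]
    exact (hc.integral_hasStrictDerivAt 0 t).hasDerivAt.hasDerivWithinAt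
  · refine intervalIntegral.integral_congr fun t ht => he t ?_
    rwa [uIcc_of_le hT.le] at ht

lemma eq_zero_of_linear_nonneg {T : ℝ} (hT : 0 < T) {y p q : ℝ → ℝ}
    (hp : ContinuousOn p (Icc 0 T))
    (hy : ∀ t ∈ Icc 0 T, HasDerivWithinAt y (p t * y t + q t) (Icc 0 T) t)
    (hq : ∀ t ∈ Icc 0 T, 0 ≤ q t) (h : y 0 = y T) {s : ℝ} (hs : s ∈ Icc 0 T) (hys : y s = 0) :
    y 0 = 0 ∧ ∀ t ∈ Icc 0 T, q t = 0 := by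
  obtain ⟨P, hP, -, -⟩ := exists_antideriv hT hp
  have hz : ∀ t ∈ Icc 0 T, HasDerivWithinAt (fun t => y t * Real.exp (-P t))
      (q t * Real.exp (-P t)) (Icc 0 T) t := fun t ht =>
    ((hy t ht).mul (hP t ht).fun_neg.exp).congr_deriv (by ring)
  have hq' : ∀ t ∈ Icc 0 T, 0 ≤ q t * Real.exp (-P t) := fun t ht =>
    mul_nonneg (hq t ht) (Real.exp_pos _).le
  have hm := monotoneOn_of_hasDerivWithin hz hq'
  have h1 := hm (left_mem_Icc.2 hT.le) hs hs.1
  have h2 := hm hs (right_mem_Icc.2 hT.le) hs.2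
  simp only [hys, zero_mul] at h1 h2
  have h3 : y 0 ≤ 0 := nonpos_of_mul_nonpos_left h1 (Real.exp_pos _)
  have h4 : 0 ≤ y T := nonneg_of_mul_nonneg_left h2 (Real.exp_pos _)
  have h5 : y 0 = 0 := le_antisymm h3 (h ▸ h4)
  refine ⟨h5, fun t ht => ?_⟩
  have h6 := deriv_eq_zero_of_nonneg hT hz hq' (by simp [h5, ← h]) t ht
  exact (mul_eq_zero.1 h6).resolve_right (Real.exp_ne_zero _)

/-- If `y' = p y + q` with `q` of constant sign, `y 0 = y T` and `y` has a zero, then `y 0 = 0` and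
`q` vanishes: times an integrating factor, `y` is monotone, so its values at `0` and `T` have
opposite signs, while `y 0 = y T` gives them the same sign. -/
lemma eq_zero_of_linear {T : ℝ} (hT : 0 < T) {y p q : ℝ → ℝ}
    (hp : ContinuousOn p (Icc 0 T))
    (hy : ∀ t ∈ Icc 0 T, HasDerivWithinAt y (p t * y t + q t) (Icc 0 T) t)
    (hq : ConstSign q (Icc 0 T)) (h : y 0 = y T) {s : ℝ} (hs : s ∈ Icc 0 T) (hys : y s = 0) :
    y 0 = 0 ∧ ∀ t ∈ Icc 0 T, q t = 0 := by
  rcases hq with hq | hq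
  · exact eq_zero_of_linear_nonneg hT hp hy hq h hs hys
  · have := eq_zero_of_linear_nonneg hT (y := fun t => -y t) (q := fun t => -q t) hp
      (fun t ht => (hy t ht).neg.congr_deriv (by ring))
      (fun t ht => neg_nonneg.2 (hq t ht)) (by simp [h]) hs (by simp [hys])
    simpa using this

/-- A closed solution with nonzero initial value forces `A + μ B`, if of constant sign, to vanish. -/
lemma eq_zero_of_closedSol {T : ℝ} (hT : 0 < T) {A B x : ℝ → ℝ} {μ : ℝ}
    (hAc : ContinuousOn A (Icc 0 T)) (hBc : ContinuousOn B (Icc 0 T))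
    (hV2 : (∫ t in (0:ℝ)..T, B t) = 0)
    (hC : ConstSign (fun t => A t + μ * B t) (Icc 0 T))
    (hx : ClosedSol A B T x) (hx0 : x 0 ≠ 0) :
    ∀ t ∈ Icc 0 T, A t + μ * B t = 0 := by
  obtain ⟨hsol, hcl⟩ := hx
  have hxc : ContinuousOn x (Icc 0 T) := fun t ht => (hsol t ht).continuousWithinAt
  have hxne : ∀ t ∈ Icc 0 T, x t ≠ 0 := fun s hs hxs => hx0
    (eq_zero_of_linear hT (y := x) (p := fun t => A t * x t ^ 2 + B t * x t) (q := fun _ => 0)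
      (by fun_prop) (fun t ht => (hsol t ht).congr_deriv (by ring))
      (constSign_const 0 _) hcl hs hxs).1
  have hxs := constSign_of_ne_zero hxc hxne
  by_cases hy : ∀ t ∈ Icc 0 T, 1 - μ * x t ≠ 0
  · have hys := constSign_of_ne_zero (f := fun t => 1 - μ * x t) (by fun_prop) hy
    obtain ⟨P, hP, hP0, hPT⟩ := exists_antideriv hT hBc
    -- `Real.log u` is `log |u|`, so the signs of `x` and `1 - μ x` play no role here
    have hF : ∀ t ∈ Icc 0 T, HasDerivWithinAt
        (fun t => -(x t)⁻¹ + μ * (Real.log (x t) - Real.log (1 - μ * x t)) - P t)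
        ((A t + μ * B t) * x t * (1 - μ * x t)⁻¹) (Icc 0 T) t := fun t ht => by
      have h1 := hxne t ht
      have h2 := hy t ht
      have hd := hsol t ht
      refine ((((hd.inv h1).neg).add ((((hd.log h1).sub
        (((hd.const_mul μ).const_sub 1).log h2)).const_mul μ))).sub (hP t ht)).congr_deriv ?_
      have h3 : (1 - μ * x t) * (1 - μ * x t)⁻¹ = 1 := mul_inv_cancel₀ h2
      simp only [div_eq_mul_inv]
      generalize (1 - μ * x t)⁻¹ = w at h3 ⊢
      field_simp
      linear_combination (-(A t * x t + A t * x t ^ 2 * μ + x t * B t * μ)) * h3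
    have h0 := deriv_eq_zero_of_constSign hT hF ((hC.mul hxs).mul hys.inv)
      (by simp only [hP0, hPT, hV2, hcl])
    intro t ht
    have h3 := (mul_eq_zero.1 (h0 t ht)).resolve_right (inv_ne_zero (hy t ht))
    exact (mul_eq_zero.1 h3).resolve_right (hxne t ht)
  · push Not at hy
    obtain ⟨s, hs, hys⟩ := hy
    have hμ : μ ≠ 0 := by
      rintro rfl
      simp at hys
    have h0 := (eq_zero_of_linear hT (y := fun t => 1 - μ * x t) (p := fun t => -μ * B t * x t ^ 2)
      (q := fun t => -μ * ((A t + μ * B t) * (x t * (x t * x t)))) (by fun_prop)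
      (fun t ht => (((hsol t ht).const_mul μ).const_sub 1).congr_deriv (by ring))
      ((constSign_const (-μ) _).mul (hC.mul (hxs.mul (hxs.mul hxs))))
      (by simp only [hcl]) hs hys).2
    intro t ht
    simpa [hμ, hxne t ht] using h0 t ht

lemma ConstSign.Icc_of_Ico {T : ℝ} (hT : 0 < T) {f : ℝ → ℝ} (hf : ContinuousOn f (Icc 0 T))
    (h : ConstSign f (Ico 0 T)) : ConstSign f (Icc 0 T) := by
  have hcl : closure (Ico 0 T) = Icc 0 T := closure_Ico hT.ne
  rw [← hcl] at hf ⊢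
  rcases h with h | h
  · exact Or.inl fun t ht => le_on_closure (f := fun _ => 0) h continuousOn_const hf ht
  · exact Or.inr fun t ht => le_on_closure (g := fun _ => 0) h hf continuousOn_const ht

/-- Under (D.1), if `V₂ = ∫₀ᵀ B = 0` and `V₃ = ∫₀ᵀ A ≠ 0`, then the Abel
equation has no limit cycles in the region `x ≠ 0`: `x = 0` is its unique limit
cycle. -/
theorem abel_D1_zero_unique_limit_cycle
    (T : ℝ) (hT : 0 < T) (A B : ℝ → ℝ)
    (hAc : ContinuousOn A (Set.Icc (0:ℝ) T))
    (hBc : ContinuousOn B (Set.Icc (0:ℝ) T))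
    (hA2 : ContDiffOn ℝ 2 A (Set.Ico (0:ℝ) T))
    (hB2 : ContDiffOn ℝ 2 B (Set.Ico (0:ℝ) T))
    (hET : IsETAcc1 (Set.Ico (0:ℝ) T) A B)
    (hD1 : ∃ l m : ℝ, ¬(l = 0 ∧ m = 0) ∧
        ((∀ t ∈ Set.Ico (0:ℝ) T, 0 ≤ l * A t + m * B t) ∨
         (∀ t ∈ Set.Ico (0:ℝ) T, l * A t + m * B t ≤ 0)))
    (hV2 : (∫ t in (0:ℝ)..T, B t) = 0)
    (hV3 : (∫ t in (0:ℝ)..T, A t) ≠ 0) :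
    LimitCycle A B T (fun _ => 0) ∧ (∀ x : ℝ → ℝ, LimitCycle A B T x → x 0 = 0) := by
  obtain ⟨l, m, hlm, hs⟩ := hD1
  have hs' : ConstSign (fun t => l * A t + m * B t) (Icc 0 T) :=
    ConstSign.Icc_of_Ico hT (by fun_prop) hs
  have hl : l ≠ 0 := by
    rintro rfl
    have hm : m ≠ 0 := fun h => hlm ⟨rfl, h⟩
    obtain ⟨P, hP, hP0, hPT⟩ := exists_antideriv hT hBc
    have hB0 := deriv_eq_zero_of_constSign hT (f := fun t => m * P t)
      (q := fun t => 0 * A t + m * B t)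
      (fun t ht => ((hP t ht).const_mul m).congr_deriv (by ring)) hs'
      (by simp only [hP0, hPT, hV2])
    exact hm (hET.1 0 m fun t ht => hB0 t (Ico_subset_Icc_self ht)).2
  have hC : ConstSign (fun t => A t + m / l * B t) (Icc 0 T) := by
    have h := (constSign_const l⁻¹ _).mul hs'
    convert h using 2 with t
    field_simp
  have key : ∀ x : ℝ → ℝ, ClosedSol A B T x → x 0 = 0 := by
    intro x hx
    by_contra hx0
    have h0 := eq_zero_of_closedSol hT hAc hBc hV2 hC hx hx0
    have := (hET.1 1 (m / l) fun t ht => by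
      simpa using h0 t (Ico_subset_Icc_self ht)).1
    exact one_ne_zero this
  refine ⟨⟨⟨fun t _ => ?_, rfl⟩, 1, one_pos, fun y hy _ => key y hy⟩, fun x hx => key x hx.1⟩
  simpa using hasDerivWithinAt_const t (Icc 0 T) (0:ℝ)
end
end

section
/- Let A, B : [0,T] → ℝ be continuous, C² on [0,T), such that {A, B} forms an ET-system with accuracy one on [0,T). If ∫₀ᵀ A(t) dt = 0, ∫₀ᵀ B(t) dt = 0, and A'(t)B(t) − A(t)B'(t) > 0 for all t ∈ [0,T), then the fourth Lyapunov constant is strictly positive: V₄ = ∫₀ᵀ A(t) (∫₀ᵗ B(s) ds) dt > 0. Symmetrically, if A'(t)B(t) − A(t)B'(t) < 0 on [0,T), then V₄ < 0. In particular, under these hypotheses the trivial solution x = 0 of the Abel equation x' = A(t)x³ + B(t)x² is a limit cycle of multiplicity exactly four. -/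
/-!
Put `a(t) = ∫₀ᵗ A`, `b(t) = ∫₀ᵗ B`. Since `a(T) = b(T) = 0`, integration by parts gives
`2 V₄ = ∫₀ᵀ (A b - B a)`, twice the signed area enclosed by the closed curve `(a, b)`. The
integrand is positive on `(0,T)` (`det_pos`): for fixed `t` the function
`g(s) = A(t) B(s) - B(t) A(s)` is a nontrivial combination of `A` and `B` that vanishes at `t` with
`g'(t) = -(A'B - AB')(t) < 0`. As `g` has at most two zeros, it has none on `(0,t)`, so that `g > 0`
there, or none on `(t,T)`, so that `g < 0` there. Because `∫₀ᵀ g = 0`, either case yields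
`A(t) b(t) - B(t) a(t) = ∫₀ᵗ g > 0`. The case `A'B - AB' < 0` follows by replacing `A` with `-A`.

That `x = 0` is a limit cycle follows from `V₄ ≠ 0` (`isolated_of_V4_ne_zero`). A closed solution
`y` with small initial value `y₀ ≠ 0` satisfies `|y - y₀| = O(y₀²)`, so it has no zeros, and
`y = y₀ + y₀² b + O(y₀³)`. Integrating `(1/y)' = -A y - B` over `[0,T]` gives `∫₀ᵀ A y = 0`, that is
`y₀² V₄ = O(y₀³)`, which is impossible for small `y₀`.
-/

open Set intervalIntegral

noncomputable section

/-! ### The sign of the fourth Lyapunov constant -/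

lemma neg_right_of_deriv_neg {g : ℝ → ℝ} (hg : Continuous g) {t T d : ℝ} (h0 : g t = 0)
    (hd : HasDerivAt g d t) (hneg : d < 0) (hz : ∀ s ∈ Ioo t T, g s ≠ 0) :
    ∀ s ∈ Ioo t T, g s < 0 := by
  intro s hs
  by_contra! hcon
  have h1 : ∀ᶠ x in nhdsWithin t (Ioi t), slope g t x < 0 :=
    ((hasDerivAt_iff_tendsto_slope.1 hd).mono_left
      (nhdsWithin_mono _ fun x hx => (ne_of_gt hx))).eventually_lt_const hneg
  obtain ⟨x, hx, hxs⟩ := (h1.and (Ioo_mem_nhdsGT hs.1)).exists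
  rw [slope_def_field, h0, sub_zero] at hx
  have hgx : g x < 0 := by
    by_contra! hc
    exact absurd hx (not_lt.2 (div_nonneg hc (by linarith [hxs.1])))
  obtain ⟨r, hr, hr0⟩ := intermediate_value_Icc hxs.2.le hg.continuousOn ⟨hgx.le, hcon⟩
  exact hz r ⟨lt_of_lt_of_le hxs.1 hr.1, lt_of_le_of_lt hr.2 hs.2⟩ hr0

lemma pos_left_of_deriv_neg {g : ℝ → ℝ} (hg : Continuous g) {t T d : ℝ} (h0 : g t = 0)
    (hd : HasDerivAt g d t) (hneg : d < 0) (hz : ∀ s ∈ Ioo T t, g s ≠ 0) :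
    ∀ s ∈ Ioo T t, 0 < g s := by
  intro s hs
  have hd' : HasDerivAt (fun x => -g (-x)) d (-t) := by
    have h1 : HasDerivAt g d (- -t) := by simpa using hd
    have := (h1.comp (-t) (hasDerivAt_neg (-t))).fun_neg
    simpa [Function.comp_def] using this
  have := neg_right_of_deriv_neg (g := fun x => -g (-x)) (T := -T) (by fun_prop) (by simp [h0])
    hd' hneg (fun x hx => by
      have := hz (-x) ⟨by linarith [hx.2], by linarith [hx.1]⟩
      simpa using this) (-s) ⟨by linarith [hs.2], by linarith [hs.1]⟩
  simpa using this

/-- The base point `0` of the closed planar curve `(∫₀ᵗ A, ∫₀ᵗ B)` lies strictly on one side of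
the tangent line at parameter `t`. The hypothesis `hz` says that nontrivial combinations of `A` and
`B` do not have three distinct zeros. -/
lemma det_pos {T : ℝ} {A B : ℝ → ℝ} (hA : Continuous A) (hB : Continuous B)
    (hz : ∀ l m : ℝ, ¬(l = 0 ∧ m = 0) → ∀ r ∈ Ioo 0 T, ∀ s ∈ Ioo 0 T, ∀ t ∈ Ioo 0 T,
      r < s → s < t → l * A r + m * B r = 0 → l * A s + m * B s = 0 → l * A t + m * B t ≠ 0)
    (hV3 : (∫ t in (0:ℝ)..T, A t) = 0) (hV2 : (∫ t in (0:ℝ)..T, B t) = 0)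
    {t a' b' : ℝ} (ht : t ∈ Ioo 0 T) (ha : HasDerivAt A a' t) (hb : HasDerivAt B b' t)
    (hW : 0 < a' * B t - A t * b') :
    0 < A t * (∫ s in (0:ℝ)..t, B s) - B t * ∫ s in (0:ℝ)..t, A s := by
  set g : ℝ → ℝ := fun s => A t * B s - B t * A s with hgdef
  have hg : Continuous g := by fun_prop
  have hint : ∀ u : ℝ, ∫ s in (0:ℝ)..u, g s =
      A t * (∫ s in (0:ℝ)..u, B s) - B t * ∫ s in (0:ℝ)..u, A s := by
    intro u
    rw [integral_sub ((by fun_prop : Continuous fun s => A t * B s).intervalIntegrable _ _)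
      ((by fun_prop : Continuous fun s => B t * A s).intervalIntegrable _ _),
      integral_const_mul, integral_const_mul]
  rw [← hint]
  have h0 : g t = 0 := by simp only [hgdef]; ring
  have hd : HasDerivAt g (A t * b' - B t * a') t := (hb.const_mul _).sub (ha.const_mul _)
  have hneg : A t * b' - B t * a' < 0 := by linarith
  have hnt : ¬(-B t = 0 ∧ A t = 0) := by
    rintro ⟨h1, h2⟩
    have h1 : B t = 0 := by linarith
    simp [h1, h2] at hW
  by_cases hl : ∃ r ∈ Ioo 0 t, g r = 0
  · obtain ⟨r, hr, hr0⟩ := hl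
    have hright := neg_right_of_deriv_neg hg (T := T) h0 hd hneg (fun s hs hs0 =>
      hz (-B t) (A t) hnt r ⟨hr.1, hr.2.trans ht.2⟩ t ht s ⟨ht.1.trans hs.1, hs.2⟩ hr.2 hs.1
        (by simp only [hgdef] at hr0; linarith) (by ring) (by simp only [hgdef] at hs0; linarith))
    have hpos : 0 < ∫ s in t..T, -g s :=
      intervalIntegral_pos_of_pos_on (hg.neg.intervalIntegrable _ _)
        (fun x hx => by have := hright x hx; linarith) ht.2
    rw [intervalIntegral.integral_neg] at hpos
    have hsum := integral_add_adjacent_intervals (hg.intervalIntegrable 0 t)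
      (hg.intervalIntegrable (μ := MeasureTheory.volume) t T)
    rw [hint T, hV2, hV3] at hsum
    linarith
  · push Not at hl
    exact intervalIntegral_pos_of_pos_on (hg.intervalIntegrable _ _)
      (pos_left_of_deriv_neg hg h0 hd hneg hl) ht.1

lemma V4_pos {T : ℝ} (hT : 0 < T) {A B A' B' : ℝ → ℝ} (hA : Continuous A) (hB : Continuous B)
    (hA' : ∀ t ∈ Ioo 0 T, HasDerivAt A (A' t) t) (hB' : ∀ t ∈ Ioo 0 T, HasDerivAt B (B' t) t)
    (hz : ∀ l m : ℝ, ¬(l = 0 ∧ m = 0) → ∀ r ∈ Ioo 0 T, ∀ s ∈ Ioo 0 T, ∀ t ∈ Ioo 0 T,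
      r < s → s < t → l * A r + m * B r = 0 → l * A s + m * B s = 0 → l * A t + m * B t ≠ 0)
    (hV3 : (∫ t in (0:ℝ)..T, A t) = 0) (hV2 : (∫ t in (0:ℝ)..T, B t) = 0)
    (hW : ∀ t ∈ Ioo 0 T, 0 < A' t * B t - A t * B' t) :
    0 < ∫ t in (0:ℝ)..T, A t * ∫ s in (0:ℝ)..t, B s := by
  have ha : ∀ t, HasDerivAt (fun t => ∫ s in (0:ℝ)..t, A s) (A t) t :=
    fun t => hA.integral_hasStrictDerivAt 0 t |>.hasDerivAt
  have hb : ∀ t, HasDerivAt (fun t => ∫ s in (0:ℝ)..t, B s) (B t) t :=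
    fun t => hB.integral_hasStrictDerivAt 0 t |>.hasDerivAt
  have hac : Continuous (fun t => ∫ s in (0:ℝ)..t, A s) :=
    continuous_iff_continuousAt.2 fun t => (ha t).continuousAt
  have hbc : Continuous (fun t => ∫ s in (0:ℝ)..t, B s) :=
    continuous_iff_continuousAt.2 fun t => (hb t).continuousAt
  have hpos : 0 < ∫ t in (0:ℝ)..T,
      (A t * (∫ s in (0:ℝ)..t, B s) - B t * ∫ s in (0:ℝ)..t, A s) :=
    intervalIntegral_pos_of_pos_on ((by fun_prop : Continuous _).intervalIntegrable _ _)
      (fun t ht => det_pos hA hB hz hV3 hV2 ht (hA' t ht) (hB' t ht) (hW t ht)) hT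
  rw [integral_sub ((by fun_prop : Continuous _).intervalIntegrable _ _)
    ((by fun_prop : Continuous _).intervalIntegrable _ _)] at hpos
  have hparts := integral_mul_deriv_eq_deriv_mul (a := 0) (b := T) (fun t _ => ha t)
    (fun t _ => hb t) (hA.intervalIntegrable _ _) (hB.intervalIntegrable _ _)
  rw [hV2, hV3] at hparts
  have hcomm : ∫ t in (0:ℝ)..T, (B t * ∫ s in (0:ℝ)..t, A s) =
      ∫ t in (0:ℝ)..T, (∫ s in (0:ℝ)..t, A s) * B t :=
    integral_congr fun t _ => mul_comm _ _
  simp only [integral_same, mul_zero, sub_zero, zero_sub] at hparts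
  linarith

/-! ### Isolation of the trivial solution -/

/-- Estimates for a solution with initial value of size `δ`, on the scale where `δ M T` is small:
it stays within `δ / 2` of its initial value (hence has no zeros), and the second-order
approximation `y 0 + y 0 ^ 2 * ∫₀ᵗ B` has error `O(δ³)`. -/
lemma abel_small_estimates {T M : ℝ} (hT : 0 < T) (hM : 1 ≤ M) {A B y : ℝ → ℝ}
    (hB : Continuous B) (hMA : ∀ t ∈ Icc 0 T, |A t| ≤ M) (hMB : ∀ t ∈ Icc 0 T, |B t| ≤ M)
    (hy : AbelSol A B T y) (h0 : y 0 ≠ 0) (h1 : |y 0| ≤ 1) (hs : 26 * M * T * |y 0| ≤ 1) :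
    (∀ t ∈ Icc 0 T, |y t - y 0| ≤ |y 0| / 2) ∧
    ∀ t ∈ Icc 0 T, |y t - y 0 - y 0 ^ 2 * ∫ s in (0:ℝ)..t, B s| ≤
      (8 * M + 39 * M ^ 2 * T) * |y 0| ^ 3 * T := by
  set δ := |y 0| with hδ
  have hδ0 : 0 < δ := abs_pos.2 h0
  have hyc : ContinuousOn y (Icc 0 T) := fun t ht => (hy t ht).continuousWithinAt
  have hyr : ∀ t ∈ Ico 0 T,
      HasDerivWithinAt y (A t * y t ^ 3 + B t * y t ^ 2) (Ici t) t := fun t ht =>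
    (hy t ⟨ht.1, ht.2.le⟩).mono_of_mem_nhdsWithin (Icc_mem_nhdsGE_of_mem ht)
  have hyb : ∀ t, |y t - y 0| ≤ δ / 2 → |y t| ≤ 2 * δ := by
    intro t ht
    have : |y t| ≤ |y t - y 0| + |y 0| := by
      simpa using abs_add_le (y t - y 0) (y 0)
    linarith
  have hlin : ∀ t ∈ Icc 0 T, 13 * M * δ ^ 2 * t ≤ δ / 2 := by
    intro t ht
    have h2 : 13 * M * δ ^ 2 * t ≤ 13 * M * δ ^ 2 * T := by
      have := ht.2
      gcongr
    nlinarith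
  -- Barrier argument: `|y - y 0|` cannot cross the line `13 M δ² t`, since on that line
  -- `|y| ≤ 2 δ` and therefore `|y'| ≤ 12 M δ²`.
  have hbar : ∀ t ∈ Icc 0 T, ‖y t - y 0‖ ≤ 13 * M * δ ^ 2 * t := by
    intro t ht
    refine image_norm_le_of_norm_deriv_right_lt_deriv_boundary (f := fun t => y t - y 0)
      (f' := fun t => A t * y t ^ 3 + B t * y t ^ 2) (B := fun t => 13 * M * δ ^ 2 * t)
      (B' := fun _ => 13 * M * δ ^ 2)
      (hyc.sub continuousOn_const) (fun x hx => (hyr x hx).sub_const _) (by simp)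
      (fun x => by simpa using (hasDerivAt_id x).const_mul (13 * M * δ ^ 2)) ?_ ht
    intro x hx hxe
    have hx' : x ∈ Icc 0 T := ⟨hx.1, hx.2.le⟩
    have hyx : |y x| ≤ 2 * δ := hyb x (by
      rw [Real.norm_eq_abs] at hxe
      rw [hxe]; exact hlin x hx')
    calc ‖A x * y x ^ 3 + B x * y x ^ 2‖ ≤ |A x| * |y x| ^ 3 + |B x| * |y x| ^ 2 := by
          rw [Real.norm_eq_abs, ← abs_pow, ← abs_pow, ← abs_mul, ← abs_mul]
          exact abs_add_le _ _
      _ ≤ M * (2 * δ) ^ 3 + M * (2 * δ) ^ 2 := by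
          have := hMA x hx'
          have := hMB x hx'
          gcongr
      _ ≤ 12 * M * δ ^ 2 := by
          have : 0 ≤ M * δ ^ 2 * (1 - δ) :=
            mul_nonneg (by positivity) (by linarith)
          nlinarith
      _ < 13 * M * δ ^ 2 := by
          have : 0 < M * δ ^ 2 := by positivity
          linarith
  have hclose : ∀ t ∈ Icc 0 T, |y t - y 0| ≤ δ / 2 := fun t ht =>
    (hbar t ht).trans (hlin t ht)
  refine ⟨hclose, fun t ht => ?_⟩
  have hb : ∀ t, HasDerivAt (fun t => ∫ s in (0:ℝ)..t, B s) (B t) t :=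
    fun t => hB.integral_hasStrictDerivAt 0 t |>.hasDerivAt
  have hbc : Continuous (fun t => ∫ s in (0:ℝ)..t, B s) :=
    continuous_iff_continuousAt.2 fun t => (hb t).continuousAt
  have key := norm_image_sub_le_of_norm_deriv_right_le_segment
    (f := fun t => y t - y 0 - y 0 ^ 2 * ∫ s in (0:ℝ)..t, B s)
    (f' := fun t => A t * y t ^ 3 + B t * y t ^ 2 - y 0 ^ 2 * B t)
    (a := 0) (b := T) (C := (8 * M + 39 * M ^ 2 * T) * δ ^ 3)
    ((hyc.sub continuousOn_const).sub (by fun_prop))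
    (fun x hx => ((hyr x hx).sub_const _).sub ((hb x).const_mul _).hasDerivWithinAt)
    (fun x hx => by
      have hx' : x ∈ Icc 0 T := ⟨hx.1, hx.2.le⟩
      have hyx := hyb x (hclose x hx')
      have hplus : |y x + y 0| ≤ 3 * δ := (abs_add_le _ _).trans (by linarith)
      have hminus : |y x - y 0| ≤ 13 * M * δ ^ 2 * T := (hbar x hx').trans (by
        have := hx'.2
        gcongr)
      calc ‖A x * y x ^ 3 + B x * y x ^ 2 - y 0 ^ 2 * B x‖
          = |A x * y x ^ 3 + B x * ((y x - y 0) * (y x + y 0))| := by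
            rw [Real.norm_eq_abs]; congr 1; ring
        _ ≤ |A x| * |y x| ^ 3 + |B x| * (|y x - y 0| * |y x + y 0|) := by
            rw [← abs_pow, ← abs_mul, ← abs_mul, ← abs_mul]
            exact abs_add_le _ _
        _ ≤ M * (2 * δ) ^ 3 + M * ((13 * M * δ ^ 2 * T) * (3 * δ)) := by
            have := hMA x hx'
            have := hMB x hx'
            gcongr
        _ = (8 * M + 39 * M ^ 2 * T) * δ ^ 3 := by ring)
    t ht
  simp only [integral_same, mul_zero, sub_zero, sub_self, Real.norm_eq_abs] at key
  refine key.trans ?_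
  have := ht.2
  gcongr

/-- A zero-free closed solution satisfies `∫₀ᵀ A y = 0`, because `(1/y)' = -A y - B`. -/
lemma integral_mul_closedSol_eq_zero {T : ℝ} (hT : 0 < T) {A B y : ℝ → ℝ} (hA : Continuous A)
    (hB : Continuous B) (hV2 : (∫ t in (0:ℝ)..T, B t) = 0) (hy : ClosedSol A B T y)
    (hne : ∀ t ∈ Icc 0 T, y t ≠ 0) : ∫ t in (0:ℝ)..T, A t * y t = 0 := by
  have hyc : ContinuousOn y (Icc 0 T) := fun t ht => (hy.1 t ht).continuousWithinAt
  have hAy : IntervalIntegrable (fun t => A t * y t) MeasureTheory.volume 0 T :=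
    (hA.continuousOn.mul hyc).intervalIntegrable_of_Icc hT.le
  have hBi : IntervalIntegrable B MeasureTheory.volume 0 T := hB.intervalIntegrable _ _
  have hftc := integral_eq_sub_of_hasDerivAt_of_le (f := fun t => (y t)⁻¹)
    (f' := fun t => -(A t * y t + B t)) hT.le (hyc.inv₀ hne)
    (fun t ht => by
      have ht' : t ∈ Icc 0 T := ⟨ht.1.le, ht.2.le⟩
      have hn := hne t ht'
      have h := ((hy.1 t ht').hasDerivAt (Icc_mem_nhds ht.1 ht.2)).fun_inv hn
      have he : -(A t * y t + B t) = -(A t * y t ^ 3 + B t * y t ^ 2) / y t ^ 2 := by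
        field_simp
      rw [he]
      exact h) (hAy.add hBi).neg
  rw [intervalIntegral.integral_neg, integral_add hAy hBi, hV2, hy.2] at hftc
  linarith

lemma isolated_of_V4_ne_zero {T : ℝ} (hT : 0 < T) {A B : ℝ → ℝ} (hA : Continuous A)
    (hB : Continuous B) (hV3 : (∫ t in (0:ℝ)..T, A t) = 0) (hV2 : (∫ t in (0:ℝ)..T, B t) = 0)
    (hV4 : (∫ t in (0:ℝ)..T, A t * ∫ s in (0:ℝ)..t, B s) ≠ 0) :
    ∃ ε > (0:ℝ), ∀ y : ℝ → ℝ, ClosedSol A B T y → |y 0| < ε → y 0 = 0 := by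
  obtain ⟨MA, hMA⟩ := isCompact_Icc.exists_bound_of_continuousOn (s := Icc 0 T) hA.continuousOn
  obtain ⟨MB, hMB⟩ := isCompact_Icc.exists_bound_of_continuousOn (s := Icc 0 T) hB.continuousOn
  obtain ⟨M, hM, hMA, hMB⟩ : ∃ M : ℝ, 1 ≤ M ∧ (∀ t ∈ Icc 0 T, |A t| ≤ M) ∧
      ∀ t ∈ Icc 0 T, |B t| ≤ M :=
    ⟨max 1 (max MA MB), le_max_left _ _,
      fun t ht => (hMA t ht).trans ((le_max_left _ _).trans (le_max_right _ _)),
      fun t ht => (hMB t ht).trans ((le_max_right _ _).trans (le_max_right _ _))⟩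
  set V := ∫ t in (0:ℝ)..T, A t * ∫ s in (0:ℝ)..t, B s with hV
  set K := M * ((8 * M + 39 * M ^ 2 * T) * T) * T with hK
  have hK0 : 0 < K := by positivity
  have hV0 : 0 < |V| := abs_pos.2 hV4
  refine ⟨min 1 (min (1 / (26 * M * T)) (|V| / K)), by positivity, fun y hy hlt => ?_⟩
  by_contra h0
  have hδ0 : 0 < |y 0| := abs_pos.2 h0
  obtain ⟨hlt1, hlt2, hlt3⟩ : |y 0| < 1 ∧ |y 0| < 1 / (26 * M * T) ∧ |y 0| < |V| / K := by
    simpa only [lt_min_iff] using hlt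
  have hs : 26 * M * T * |y 0| ≤ 1 := by
    rw [lt_div_iff₀ (by positivity)] at hlt2
    linarith
  obtain ⟨hclose, hest⟩ := abel_small_estimates hT hM hB hMA hMB hy.1 h0 hlt1.le hs
  have hyc : ContinuousOn y (Icc 0 T) := fun t ht => (hy.1 t ht).continuousWithinAt
  have hzero := integral_mul_closedSol_eq_zero hT hA hB hV2 hy (fun t ht h => by
    have := hclose t ht
    rw [h, zero_sub, abs_neg] at this
    linarith)
  have hbc : Continuous (fun t => ∫ s in (0:ℝ)..t, B s) :=
    continuous_iff_continuousAt.2 fun t =>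
      (hB.integral_hasStrictDerivAt 0 t).hasDerivAt.continuousAt
  have hrem : ∫ t in (0:ℝ)..T, A t * (y t - y 0 - y 0 ^ 2 * ∫ s in (0:ℝ)..t, B s) =
      -(y 0 ^ 2 * V) := by
    have hAy : IntervalIntegrable (fun t => A t * y t) MeasureTheory.volume 0 T :=
      (hA.continuousOn.mul hyc).intervalIntegrable_of_Icc hT.le
    have hA0 : IntervalIntegrable (fun t => y 0 * A t) MeasureTheory.volume 0 T :=
      (by fun_prop : Continuous _).intervalIntegrable _ _
    have hAb : IntervalIntegrable (fun t => y 0 ^ 2 * (A t * ∫ s in (0:ℝ)..t, B s))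
        MeasureTheory.volume 0 T :=
      (by fun_prop : Continuous _).intervalIntegrable _ _
    calc _ = ∫ t in (0:ℝ)..T,
          (A t * y t - y 0 * A t - y 0 ^ 2 * (A t * ∫ s in (0:ℝ)..t, B s)) :=
          integral_congr fun t _ => by ring
      _ = _ := by
          rw [integral_sub (hAy.sub hA0) hAb, integral_sub hAy hA0, integral_const_mul,
            integral_const_mul, hzero, hV3]
          ring
  have hle : ‖∫ t in (0:ℝ)..T, A t * (y t - y 0 - y 0 ^ 2 * ∫ s in (0:ℝ)..t, B s)‖ ≤
      M * ((8 * M + 39 * M ^ 2 * T) * |y 0| ^ 3 * T) * |T - 0| := by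
    refine norm_integral_le_of_norm_le_const fun t ht => ?_
    rw [uIoc_of_le hT.le] at ht
    have ht' : t ∈ Icc 0 T := ⟨ht.1.le, ht.2⟩
    rw [norm_mul]
    exact mul_le_mul (hMA t ht') (hest t ht') (norm_nonneg _) (by linarith)
  rw [hrem, sub_zero, abs_of_pos hT, Real.norm_eq_abs, abs_neg, abs_mul, abs_pow] at hle
  rw [lt_div_iff₀ hK0] at hlt3
  have : |y 0| ^ 2 * (|y 0| * K) < |y 0| ^ 2 * |V| := by gcongr
  have he : M * ((8 * M + 39 * M ^ 2 * T) * |y 0| ^ 3 * T) * T = |y 0| ^ 2 * (|y 0| * K) := by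
    rw [hK]; ring
  linarith

/-! ### Reduction to coefficients continuous on the whole line -/

lemma three_zeros_of_isETAcc1 {T : ℝ} {A B : ℝ → ℝ} (hET : IsETAcc1 (Ico 0 T) A B) :
    ∀ l m : ℝ, ¬(l = 0 ∧ m = 0) → ∀ r ∈ Ioo 0 T, ∀ s ∈ Ioo 0 T, ∀ t ∈ Ioo 0 T,
      r < s → s < t → l * A r + m * B r = 0 → l * A s + m * B s = 0 → l * A t + m * B t ≠ 0 := by
  intro l m hlm r hr s hs t ht hrs hst hr0 hs0 ht0
  have h := hET.2 l m hlm {r, s, t} (fun _ => 1) (by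
    intro x hx
    simp only [Finset.mem_insert, Finset.mem_singleton] at hx
    have hx' : x ∈ Ico 0 T ∧ l * A x + m * B x = 0 := by
      rcases hx with rfl | rfl | rfl
      · exact ⟨Ioo_subset_Ico_self hr, hr0⟩
      · exact ⟨Ioo_subset_Ico_self hs, hs0⟩
      · exact ⟨Ioo_subset_Ico_self ht, ht0⟩
    refine ⟨hx'.1, le_rfl, fun k hk => ?_⟩
    obtain rfl : k = 0 := by omega
    simpa using hx'.2)
  have hcard : ({r, s, t} : Finset ℝ).card = 3 :=
    Finset.card_eq_three.2 ⟨r, s, t, hrs.ne, (hrs.trans hst).ne, hst.ne, rfl⟩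
  simp [hcard] at h

lemma exists_continuous_extension {T : ℝ} (hT : 0 < T) {A : ℝ → ℝ}
    (hA : ContinuousOn A (Icc 0 T)) : ∃ F : ℝ → ℝ, Continuous F ∧ ∀ t ∈ Icc 0 T, F t = A t :=
  ⟨IccExtend hT.le ((Icc 0 T).domRestrict A), hA.domRestrict.Icc_extend',
    fun t ht => by rw [IccExtend_of_mem hT.le _ ht]; rfl⟩

/-- If `{A,B}` is an ET-system with accuracy one on `[0,T)`,
`∫₀ᵀ A = ∫₀ᵀ B = 0`, then the fourth Lyapunov constant
`V₄ = ∫₀ᵀ A(t)(∫₀ᵗ B) dt` is `> 0` when `A'B − AB' > 0` on `[0,T)` and `< 0` when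
`A'B − AB' < 0` on `[0,T)`; in particular, in either case `x = 0` is a limit cycle
(of multiplicity four). -/
theorem abel_fourth_Lyapunov_constant_sign
    (T : ℝ) (hT : 0 < T) (A B A' B' : ℝ → ℝ)
    (hAc : ContinuousOn A (Set.Icc (0:ℝ) T))
    (hBc : ContinuousOn B (Set.Icc (0:ℝ) T))
    (hA2 : ContDiffOn ℝ 2 A (Set.Ico (0:ℝ) T))
    (hB2 : ContDiffOn ℝ 2 B (Set.Ico (0:ℝ) T))
    (hA' : ∀ t ∈ Set.Ico (0:ℝ) T, HasDerivWithinAt A (A' t) (Set.Ico (0:ℝ) T) t)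
    (hB' : ∀ t ∈ Set.Ico (0:ℝ) T, HasDerivWithinAt B (B' t) (Set.Ico (0:ℝ) T) t)
    (hET : IsETAcc1 (Set.Ico (0:ℝ) T) A B)
    (hV3 : (∫ t in (0:ℝ)..T, A t) = 0)
    (hV2 : (∫ t in (0:ℝ)..T, B t) = 0) :
    ((∀ t ∈ Set.Ico (0:ℝ) T, 0 < A' t * B t - A t * B' t) →
        0 < ∫ t in (0:ℝ)..T, A t * ∫ s in (0:ℝ)..t, B s) ∧
    ((∀ t ∈ Set.Ico (0:ℝ) T, A' t * B t - A t * B' t < 0) →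
        (∫ t in (0:ℝ)..T, A t * ∫ s in (0:ℝ)..t, B s) < 0) ∧
    (((∀ t ∈ Set.Ico (0:ℝ) T, 0 < A' t * B t - A t * B' t) ∨
      (∀ t ∈ Set.Ico (0:ℝ) T, A' t * B t - A t * B' t < 0)) →
        LimitCycle A B T (fun _ => 0)) := by
  obtain ⟨F, hF, hFA⟩ := exists_continuous_extension hT hAc
  obtain ⟨G, hG, hGB⟩ := exists_continuous_extension hT hBc
  have hu : uIcc 0 T = Icc 0 T := uIcc_of_le hT.le
  have hsub : Ioo 0 T ⊆ Icc 0 T := Ioo_subset_Icc_self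
  have hF3 : (∫ t in (0:ℝ)..T, F t) = 0 := by
    refine Eq.trans ?_ hV3
    exact integral_congr fun t ht => hFA t (hu ▸ ht)
  have hG2 : (∫ t in (0:ℝ)..T, G t) = 0 := by
    refine Eq.trans ?_ hV2
    exact integral_congr fun t ht => hGB t (hu ▸ ht)
  have hV4 : (∫ t in (0:ℝ)..T, A t * ∫ s in (0:ℝ)..t, B s) =
      ∫ t in (0:ℝ)..T, F t * ∫ s in (0:ℝ)..t, G s := by
    refine integral_congr fun t ht => ?_
    rw [hu] at ht
    have : ∫ s in (0:ℝ)..t, B s = ∫ s in (0:ℝ)..t, G s := by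
      refine integral_congr fun s hs => ?_
      rw [uIcc_of_le ht.1] at hs
      exact (hGB s ⟨hs.1, hs.2.trans ht.2⟩).symm
    simp only [this, hFA t ht]
  have hF' : ∀ t ∈ Ioo 0 T, HasDerivAt F (A' t) t := fun t ht =>
    ((hA' t (Ioo_subset_Ico_self ht)).hasDerivAt (Ico_mem_nhds ht.1 ht.2)).congr_of_eventuallyEq
      (by filter_upwards [Icc_mem_nhds ht.1 ht.2] with x hx using hFA x hx)
  have hG' : ∀ t ∈ Ioo 0 T, HasDerivAt G (B' t) t := fun t ht =>
    ((hB' t (Ioo_subset_Ico_self ht)).hasDerivAt (Ico_mem_nhds ht.1 ht.2)).congr_of_eventuallyEq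
      (by filter_upwards [Icc_mem_nhds ht.1 ht.2] with x hx using hGB x hx)
  have hz : ∀ l m : ℝ, ¬(l = 0 ∧ m = 0) → ∀ r ∈ Ioo 0 T, ∀ s ∈ Ioo 0 T, ∀ t ∈ Ioo 0 T,
      r < s → s < t → l * F r + m * G r = 0 → l * F s + m * G s = 0 →
      l * F t + m * G t ≠ 0 := by
    intro l m hlm r hr s hs t ht
    rw [hFA r (hsub hr), hFA s (hsub hs), hFA t (hsub ht), hGB r (hsub hr), hGB s (hsub hs),
      hGB t (hsub ht)]
    exact three_zeros_of_isETAcc1 hET l m hlm r hr s hs t ht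
  have hpos : (∀ t ∈ Set.Ico (0:ℝ) T, 0 < A' t * B t - A t * B' t) →
      0 < ∫ t in (0:ℝ)..T, A t * ∫ s in (0:ℝ)..t, B s := by
    intro hW
    rw [hV4]
    refine V4_pos hT hF hG hF' hG' hz hF3 hG2 fun t ht => ?_
    rw [hFA t (hsub ht), hGB t (hsub ht)]
    exact hW t (Ioo_subset_Ico_self ht)
  have hneg : (∀ t ∈ Set.Ico (0:ℝ) T, A' t * B t - A t * B' t < 0) →
      (∫ t in (0:ℝ)..T, A t * ∫ s in (0:ℝ)..t, B s) < 0 := by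
    intro hW
    rw [hV4]
    -- Replacing `A` with `-A` changes the sign of both `A'B - AB'` and `V₄`.
    have h := V4_pos (A := fun t => -F t) (A' := fun t => -A' t) hT hF.neg hG
      (fun t ht => (hF' t ht).neg) hG'
      (fun l m hlm r hr s hs t ht hrs hst h1 h2 h3 =>
        hz (-l) m (by simpa using hlm) r hr s hs t ht hrs hst (by linarith) (by linarith)
          (by linarith))
      (by rw [intervalIntegral.integral_neg, hF3, neg_zero]) hG2
      (fun t ht => by
        rw [hFA t (hsub ht), hGB t (hsub ht)]
        linarith [hW t (Ioo_subset_Ico_self ht)])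
    simp only [neg_mul, intervalIntegral.integral_neg] at h
    linarith
  refine ⟨hpos, hneg, fun hW => ⟨⟨fun t _ => ?_, rfl⟩, ?_⟩⟩
  · simpa using hasDerivWithinAt_const t (Icc (0:ℝ) T) (0:ℝ)
  · have hne : (∫ t in (0:ℝ)..T, F t * ∫ s in (0:ℝ)..t, G s) ≠ 0 := by
      rw [← hV4]
      exact hW.elim (fun h => (hpos h).ne') (fun h => (hneg h).ne)
    obtain ⟨ε, hε, hiso⟩ := isolated_of_V4_ne_zero hT hF hG hF3 hG2 hne
    refine ⟨ε, hε, fun y hy hlt => hiso y ⟨fun t ht => ?_, hy.2⟩ (by simpa using hlt)⟩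
    rw [hFA t ht, hGB t ht]
    exact hy.1 t ht
end
end

section
/- Let T > 0 and let F = {f₀, f₁, f₂} be an ET-system on [0,T) with each fᵢ continuous on [0,T] and f₀ > 0 on [0,T]. For η = (λ₀, λ₁, λ₂, μ₀, μ₁, μ₂) ∈ ℝ⁶ write A_η = λ₀f₀ + λ₁f₁ + λ₂f₂ and B_η = μ₀f₀ + μ₁f₁ + μ₂f₂. Define L_H = {η ∈ ℝ⁶ : A_η'(t)B_η(t) − A_η(t)B_η'(t) > 0 for all t ∈ [0,T), and there is no (λ, μ) ≠ (0,0) with λA_η + μB_η ≥ 0 on [0,T) or λA_η + μB_η ≤ 0 on [0,T)}, and L₁ = {η ∈ ℝ⁶ : there exists (λ, μ) ≠ (0,0) with λA_η + μB_η ≥ 0 on [0,T) or λA_η + μB_η ≤ 0 on [0,T)}. Then L_H is an open subset of ℝ⁶ and its topological boundary satisfies ∂L_H ⊆ L₁. -/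
/-!
The condition `η ∉ L₁` alone forces the Wronskian `W = A'B - AB'` to be nonzero on all of
`[0,T)`. Indeed, if `W(t₀) = 0`, the vectors `(A, B)` and `(A', B')` at `t₀` are dependent, so
some nontrivial `C = lA + mB` satisfies `C(t₀) = C'(t₀) = 0`. If `C` is the trivial combination
of the `fᵢ`, it has constant sign; otherwise the ET property says that `t₀` is a zero of exact
order two and the only zero on `[0,T)`, so `C` again has constant sign
(`ET_double_zero_const_sign`). Either way `η ∈ L₁` (`wronskian_ne_zero`).

Since `W` is continuous on the interval `[0,T)`, it follows that
`L_H = L₁ᶜ ∩ {η | 0 < W_η(0)}` (`LHset_eq`). The set `L₁` is closed, by compactness of the unit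
sphere of pairs `(l, m)` (`isClosed_L1set`), and `W_η(0)` is continuous in `η`, so `L_H` is
open. A boundary point outside `L₁` would satisfy `W_η(0) ≥ 0`, hence `W_η(0) > 0`, and so would
lie in the open set `L_H`, which is disjoint from its boundary.
-/

open Set intervalIntegral

noncomputable section

/-- For `η = (λ₀,λ₁,λ₂,μ₀,μ₁,μ₂) ∈ ℝ⁶`, the coefficient `A_η = λ₀f₀ + λ₁f₁ + λ₂f₂`. -/
def Aeta (f₀ f₁ f₂ : ℝ → ℝ) (η : Fin 6 → ℝ) : ℝ → ℝ :=
  fun t => η 0 * f₀ t + η 1 * f₁ t + η 2 * f₂ t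

/-- For `η = (λ₀,λ₁,λ₂,μ₀,μ₁,μ₂) ∈ ℝ⁶`, the coefficient `B_η = μ₀f₀ + μ₁f₁ + μ₂f₂`. -/
def Beta (f₀ f₁ f₂ : ℝ → ℝ) (η : Fin 6 → ℝ) : ℝ → ℝ :=
  fun t => η 3 * f₀ t + η 4 * f₁ t + η 5 * f₂ t

/-- The set `L₁` of parameters for which some nontrivial combination `λA_η + μB_η` has
constant sign on `[0,T)`. -/
def L1set (T : ℝ) (f₀ f₁ f₂ : ℝ → ℝ) : Set (Fin 6 → ℝ) :=
  {η | ∃ l m : ℝ, ¬(l = 0 ∧ m = 0) ∧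
      ((∀ t ∈ Set.Ico (0:ℝ) T, 0 ≤ l * Aeta f₀ f₁ f₂ η t + m * Beta f₀ f₁ f₂ η t) ∨
       (∀ t ∈ Set.Ico (0:ℝ) T, l * Aeta f₀ f₁ f₂ η t + m * Beta f₀ f₁ f₂ η t ≤ 0))}

/-- The set `L_H` of parameters satisfying hypothesis (H): `A_η'B_η − A_ηB_η' > 0` on
`[0,T)` and no nontrivial combination of `A_η, B_η` has constant sign on `[0,T)`.
(Here `fᵢ'` denotes the derivative of `fᵢ`, so `Aeta f₀' f₁' f₂' η = (A_η)'`.) -/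
def LHset (T : ℝ) (f₀ f₁ f₂ f₀' f₁' f₂' : ℝ → ℝ) : Set (Fin 6 → ℝ) :=
  {η | (∀ t ∈ Set.Ico (0:ℝ) T,
          0 < Aeta f₀' f₁' f₂' η t * Beta f₀ f₁ f₂ η t
              - Aeta f₀ f₁ f₂ η t * Beta f₀' f₁' f₂' η t) ∧
       η ∉ L1set T f₀ f₁ f₂}

/-- If `C` has no zero on `[0,T)` other than `t₀` and is nonnegative near `t₀`, then it is
nonnegative throughout, by the intermediate value theorem on each side of `t₀`. -/
theorem nonneg_of_local_nonneg {T t₀ : ℝ} {C : ℝ → ℝ}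
    (hC : ContinuousOn C (Ico 0 T)) (ht₀ : t₀ ∈ Ioo 0 T) (h0 : C t₀ = 0)
    (hne : ∀ s ∈ Ico (0:ℝ) T, s ≠ t₀ → C s ≠ 0)
    (hloc : ∀ᶠ t in nhds t₀, 0 ≤ C t) : ∀ s ∈ Ico (0:ℝ) T, 0 ≤ C s := by
  intro s hs
  by_contra! hneg
  have hst : s ≠ t₀ := fun h => by rw [h, h0] at hneg; exact lt_irrefl _ hneg
  obtain ⟨ε, hε, hball⟩ := Metric.eventually_nhds_iff.1 hloc
  rcases lt_or_gt_of_ne hst with hlt | hgt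
  · have hu : ∃ u, s < u ∧ u < t₀ ∧ t₀ - ε < u := by
      obtain ⟨u, h1, h2⟩ := exists_between (max_lt hlt (sub_lt_self t₀ hε))
      exact ⟨u, (le_max_left _ _).trans_lt h1, h2, (le_max_right _ _).trans_lt h1⟩
    obtain ⟨u, hsu, hut, hue⟩ := hu
    have hCu : 0 ≤ C u := hball (by rw [Real.dist_eq, abs_lt]; constructor <;> linarith)
    have hsub : Icc s u ⊆ Ico 0 T := fun x hx =>
      ⟨hs.1.trans hx.1, (hx.2.trans_lt hut).trans ht₀.2⟩
    obtain ⟨x, hx, hx0⟩ := intermediate_value_Icc hsu.le (hC.mono hsub) ⟨hneg.le, hCu⟩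
    exact hne x (hsub hx) (hx.2.trans_lt hut).ne hx0
  · have hu : ∃ u, t₀ < u ∧ u < s ∧ u < t₀ + ε := by
      obtain ⟨u, h1, h2⟩ := exists_between (lt_min hgt (lt_add_of_pos_right t₀ hε))
      exact ⟨u, h1, h2.trans_le (min_le_left _ _), h2.trans_le (min_le_right _ _)⟩
    obtain ⟨u, htu, hus, hue⟩ := hu
    have hCu : 0 ≤ C u := hball (by rw [Real.dist_eq, abs_lt]; constructor <;> linarith)
    have hsub : Icc u s ⊆ Ico 0 T := fun x hx =>
      ⟨ht₀.1.le.trans (htu.le.trans hx.1), hx.2.trans_lt hs.2⟩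
    obtain ⟨x, hx, hx0⟩ := intermediate_value_Icc' hus.le (hC.mono hsub) ⟨hneg.le, hCu⟩
    exact hne x (hsub hx) (htu.trans_le hx.1).ne' hx0

/-- A `C²` function whose only zero on `[0,T)` is an interior point of exact order two has
constant sign: the zero is a local extremum by the second derivative test. -/
theorem const_sign_of_interior_double_zero {T t₀ : ℝ} {C : ℝ → ℝ}
    (hC2 : ContDiffOn ℝ 2 C (Ico 0 T)) (ht₀ : t₀ ∈ Ioo 0 T)
    (h0 : C t₀ = 0) (h1 : HasDerivWithinAt C 0 (Ico 0 T) t₀)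
    (hne : ∀ s ∈ Ico (0:ℝ) T, s ≠ t₀ → C s ≠ 0)
    (h2 : iteratedDerivWithin 2 C (Ico 0 T) t₀ ≠ 0) :
    (∀ s ∈ Ico (0:ℝ) T, 0 ≤ C s) ∨ (∀ s ∈ Ico (0:ℝ) T, C s ≤ 0) := by
  have hE : Ico (0:ℝ) T ∈ nhds t₀ := Ico_mem_nhds ht₀.1 ht₀.2
  have hmem : t₀ ∈ Ico (0:ℝ) T := ⟨ht₀.1.le, ht₀.2⟩
  have hd : deriv C t₀ = 0 := (h1.hasDerivAt hE).deriv
  have hc : ContinuousAt C t₀ := (hC2.continuousOn).continuousAt hE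
  have hdd : deriv (deriv C) t₀ ≠ 0 := by
    rw [iteratedDerivWithin_eq_iteratedDeriv (uniqueDiffOn_Ico 0 T)
      (hC2.contDiffAt hE) hmem, iteratedDeriv_succ, iteratedDeriv_one] at h2
    exact h2
  rcases lt_or_gt_of_ne hdd with hlt | hgt
  · right
    have hmax := isLocalMax_of_deriv_deriv_neg hlt hd hc
    have := nonneg_of_local_nonneg (C := fun t => -C t) hC2.continuousOn.neg ht₀ (by simp [h0])
      (fun s hs hst => neg_ne_zero.2 (hne s hs hst))
      (hmax.mono fun t ht => by rw [h0] at ht; linarith)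
    intro s hs
    have := this s hs
    linarith
  · left
    have hmin := isLocalMin_of_deriv_deriv_pos hgt hd hc
    exact nonneg_of_local_nonneg hC2.continuousOn ht₀ h0 hne
      (hmin.mono fun t ht => by rwa [h0] at ht)

/-- A `C²` function with at most two zeros on `[0,T)`, counted with multiplicities, and with a
double zero there, has constant sign on `[0,T)`. -/
theorem ET_double_zero_const_sign {T t₀ : ℝ} {C : ℝ → ℝ}
    (hC2 : ContDiffOn ℝ 2 C (Ico 0 T)) (hz : AtMostZerosOn (Ico 0 T) C 2)
    (ht₀ : t₀ ∈ Ico 0 T) (h0 : C t₀ = 0) (h1 : HasDerivWithinAt C 0 (Ico 0 T) t₀) :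
    (∀ s ∈ Ico (0:ℝ) T, 0 ≤ C s) ∨ (∀ s ∈ Ico (0:ℝ) T, C s ≤ 0) := by
  have hd : derivWithin C (Ico 0 T) t₀ = 0 := h1.derivWithin (uniqueDiffOn_Ico 0 T t₀ ht₀)
  have hne : ∀ s ∈ Ico (0:ℝ) T, s ≠ t₀ → C s ≠ 0 := by
    intro s hs hst hs0
    have := hz {t₀, s} (fun t => if t = t₀ then 2 else 1) (by
      intro t ht
      rcases Finset.mem_insert.1 ht with rfl | ht
      · refine ⟨ht₀, by simp, fun k hk => ?_⟩
        simp only [if_true] at hk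
        interval_cases k
        · simpa using h0
        · simpa [iteratedDerivWithin_one] using hd
      · rw [Finset.mem_singleton] at ht
        subst ht
        refine ⟨hs, by simp [hst], fun k hk => ?_⟩
        simp only [hst, if_false] at hk
        interval_cases k
        simpa using hs0)
    rw [Finset.sum_pair hst.symm] at this
    simp [hst] at this
  have h2 : iteratedDerivWithin 2 C (Ico 0 T) t₀ ≠ 0 := by
    intro h2
    have := hz {t₀} (fun _ => 3) (by
      intro t ht
      rw [Finset.mem_singleton] at ht
      subst ht
      refine ⟨ht₀, by simp, fun k hk => ?_⟩
      interval_cases k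
      · simpa using h0
      · simpa [iteratedDerivWithin_one] using hd
      · exact h2)
    simp at this
  rcases ht₀.1.eq_or_lt with h | h
  · -- For `t₀ = 0` only the side `(0,T)` matters, and `C` does not vanish there.
    subst h
    by_contra! hcon
    obtain ⟨⟨a, ha, hCa⟩, b, hb, hCb⟩ := hcon
    have ha0 : 0 < a := ha.1.lt_of_ne (by rintro rfl; linarith)
    have hb0 : 0 < b := hb.1.lt_of_ne (by rintro rfl; linarith)
    have hsub : Ioo (0:ℝ) T ⊆ Ico 0 T := Ioo_subset_Ico_self
    obtain ⟨x, hx, hx0⟩ := isPreconnected_Ioo.intermediate_value (s := Ioo (0:ℝ) T)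
      ⟨ha0, ha.2⟩ ⟨hb0, hb.2⟩ (hC2.continuousOn.mono hsub) ⟨hCa.le, hCb.le⟩
    exact hne x (hsub hx) hx.1.ne' hx0
  · exact const_sign_of_interior_double_zero hC2 ⟨h, ht₀.2⟩ h0 h1 hne h2

/-- Outside `L₁` the Wronskian `A'B - AB'` has no zero on `[0,T)`. -/
theorem wronskian_ne_zero {T : ℝ} {f₀ f₁ f₂ f₀' f₁' f₂' : ℝ → ℝ}
    (hf₀C2 : ContDiffOn ℝ 2 f₀ (Ico (0:ℝ) T)) (hf₁C2 : ContDiffOn ℝ 2 f₁ (Ico (0:ℝ) T))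
    (hf₂C2 : ContDiffOn ℝ 2 f₂ (Ico (0:ℝ) T))
    (hET : IsETSystem3 (Ico (0:ℝ) T) f₀ f₁ f₂)
    (hd₀ : ∀ t ∈ Ico (0:ℝ) T, HasDerivWithinAt f₀ (f₀' t) (Ico (0:ℝ) T) t)
    (hd₁ : ∀ t ∈ Ico (0:ℝ) T, HasDerivWithinAt f₁ (f₁' t) (Ico (0:ℝ) T) t)
    (hd₂ : ∀ t ∈ Ico (0:ℝ) T, HasDerivWithinAt f₂ (f₂' t) (Ico (0:ℝ) T) t)
    {η : Fin 6 → ℝ} (hη : η ∉ L1set T f₀ f₁ f₂) {t : ℝ} (ht : t ∈ Ico 0 T) :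
    Aeta f₀' f₁' f₂' η t * Beta f₀ f₁ f₂ η t
      - Aeta f₀ f₁ f₂ η t * Beta f₀' f₁' f₂' η t ≠ 0 := by
  intro hW
  apply hη
  -- A kernel vector of the dependent pair `(A, B)`, `(A', B')` at `t`: orthogonal to the first
  -- of the two that is nonzero, and arbitrary when both vanish.
  obtain ⟨l, m, hlm, hv, hv'⟩ : ∃ l m : ℝ, ¬(l = 0 ∧ m = 0) ∧
      l * Aeta f₀ f₁ f₂ η t + m * Beta f₀ f₁ f₂ η t = 0 ∧
      l * Aeta f₀' f₁' f₂' η t + m * Beta f₀' f₁' f₂' η t = 0 := by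
    by_cases h : Aeta f₀ f₁ f₂ η t = 0 ∧ Beta f₀ f₁ f₂ η t = 0
    · by_cases h' : Aeta f₀' f₁' f₂' η t = 0 ∧ Beta f₀' f₁' f₂' η t = 0
      · exact ⟨1, 0, by simp, by simp [h.1], by simp [h'.1]⟩
      · exact ⟨Beta f₀' f₁' f₂' η t, -Aeta f₀' f₁' f₂' η t,
          fun hh => h' ⟨neg_eq_zero.1 hh.2, hh.1⟩, by simp [h.1, h.2], by ring⟩
    · exact ⟨Beta f₀ f₁ f₂ η t, -Aeta f₀ f₁ f₂ η t,
        fun hh => h ⟨neg_eq_zero.1 hh.2, hh.1⟩, by ring, by linarith⟩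
  refine ⟨l, m, hlm, ?_⟩
  set a := l * η 0 + m * η 3 with ha
  set b := l * η 1 + m * η 4 with hb
  set c := l * η 2 + m * η 5 with hc
  have key : ∀ (g₀ g₁ g₂ : ℝ → ℝ) (s : ℝ), l * Aeta g₀ g₁ g₂ η s + m * Beta g₀ g₁ g₂ η s
      = a * g₀ s + b * g₁ s + c * g₂ s := by
    intro g₀ g₁ g₂ s
    simp only [Aeta, Beta, ha, hb, hc]
    ring
  simp only [key] at hv hv' ⊢
  by_cases habc : a = 0 ∧ b = 0 ∧ c = 0
  · left
    intro s _
    simp [habc.1, habc.2.1, habc.2.2]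
  · refine ET_double_zero_const_sign (C := fun s => a * f₀ s + b * f₁ s + c * f₂ s)
      (((contDiffOn_const.mul hf₀C2).add (contDiffOn_const.mul hf₁C2)).add
        (contDiffOn_const.mul hf₂C2)) (hET.2 a b c habc) ht hv ?_
    have hder := (((hd₀ t ht).const_mul a).add ((hd₁ t ht).const_mul b)).add ((hd₂ t ht).const_mul c)
    rw [hv'] at hder
    exact hder

/-- `L₁` is closed: the pair `(l, m)` may be normalized to the unit sphere, and the projection
along a compact factor is a closed map. -/
theorem isClosed_L1set (T : ℝ) (f₀ f₁ f₂ : ℝ → ℝ) : IsClosed (L1set T f₀ f₁ f₂) := by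
  let K : Set (Metric.sphere (0 : ℝ × ℝ) 1 × (Fin 6 → ℝ)) :=
    {q | ∀ t ∈ Ico (0:ℝ) T,
      0 ≤ q.1.1.1 * Aeta f₀ f₁ f₂ q.2 t + q.1.1.2 * Beta f₀ f₁ f₂ q.2 t}
  have hK : IsClosed K := by
    simp only [K, ofPred_forall]
    refine isClosed_iInter fun t => isClosed_iInter fun _ => ?_
    simp only [Aeta, Beta]
    exact isClosed_le continuous_const (by fun_prop)
  have himg : L1set T f₀ f₁ f₂ = Prod.snd '' K := by
    ext η
    constructor
    · rintro ⟨l, m, hlm, h⟩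
      -- Replacing `(l, m)` by its negative reduces the nonpositive case to the nonnegative one.
      obtain ⟨l, m, hlm, h⟩ : ∃ l m : ℝ, ¬(l = 0 ∧ m = 0) ∧ ∀ t ∈ Ico (0:ℝ) T,
          0 ≤ l * Aeta f₀ f₁ f₂ η t + m * Beta f₀ f₁ f₂ η t := by
        rcases h with h | h
        · exact ⟨l, m, hlm, h⟩
        · exact ⟨-l, -m, by simpa using hlm, fun t ht => by linarith [h t ht]⟩
      have hne : ((l, m) : ℝ × ℝ) ≠ 0 := fun h => hlm (Prod.mk_eq_zero.1 h)
      have hpos : 0 < ‖((l, m) : ℝ × ℝ)‖⁻¹ := inv_pos.2 (norm_pos_iff.2 hne)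
      refine ⟨(⟨‖((l, m) : ℝ × ℝ)‖⁻¹ • (l, m), ?_⟩, η), ?_, rfl⟩
      · rw [mem_sphere_zero_iff_norm, norm_smul, norm_inv, norm_norm,
          inv_mul_cancel₀ (norm_ne_zero_iff.2 hne)]
      · intro t ht
        have := mul_nonneg hpos.le (h t ht)
        simp only [Prod.smul_mk, smul_eq_mul]
        linarith
    · rintro ⟨⟨⟨⟨l, m⟩, hp⟩, η⟩, h, rfl⟩
      refine ⟨l, m, ?_, Or.inl h⟩
      rintro ⟨rfl, rfl⟩
      simp at hp
  rw [himg]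
  exact isClosedMap_snd_of_compactSpace K hK

/-- Outside `L₁` the Wronskian is continuous and nonvanishing, so its sign on `[0,T)` is read
off at `t = 0`. -/
theorem LHset_eq {T : ℝ} (hT : 0 < T) {f₀ f₁ f₂ f₀' f₁' f₂' : ℝ → ℝ}
    (hf₀C2 : ContDiffOn ℝ 2 f₀ (Ico (0:ℝ) T)) (hf₁C2 : ContDiffOn ℝ 2 f₁ (Ico (0:ℝ) T))
    (hf₂C2 : ContDiffOn ℝ 2 f₂ (Ico (0:ℝ) T))
    (hET : IsETSystem3 (Ico (0:ℝ) T) f₀ f₁ f₂)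
    (hd₀ : ∀ t ∈ Ico (0:ℝ) T, HasDerivWithinAt f₀ (f₀' t) (Ico (0:ℝ) T) t)
    (hd₁ : ∀ t ∈ Ico (0:ℝ) T, HasDerivWithinAt f₁ (f₁' t) (Ico (0:ℝ) T) t)
    (hd₂ : ∀ t ∈ Ico (0:ℝ) T, HasDerivWithinAt f₂ (f₂' t) (Ico (0:ℝ) T) t) :
    LHset T f₀ f₁ f₂ f₀' f₁' f₂' = (L1set T f₀ f₁ f₂)ᶜ ∩
      {η | 0 < Aeta f₀' f₁' f₂' η 0 * Beta f₀ f₁ f₂ η 0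
        - Aeta f₀ f₁ f₂ η 0 * Beta f₀' f₁' f₂' η 0} := by
  have hcont : ∀ {f f' : ℝ → ℝ}, ContDiffOn ℝ 2 f (Ico (0:ℝ) T) →
      (∀ t ∈ Ico (0:ℝ) T, HasDerivWithinAt f (f' t) (Ico (0:ℝ) T) t) →
      ContinuousOn f' (Ico (0:ℝ) T) := fun hf hd =>
    (hf.continuousOn_derivWithin (uniqueDiffOn_Ico 0 T) (by norm_num)).congr fun t ht =>
      ((hd t ht).derivWithin (uniqueDiffOn_Ico 0 T t ht)).symm
  have h0 : (0:ℝ) ∈ Ico 0 T := ⟨le_rfl, hT⟩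
  ext η
  refine ⟨fun h => ⟨h.2, h.1 0 h0⟩, fun h => ⟨fun t ht => ?_, h.1⟩⟩
  by_contra! hneg
  have c₀ := hcont hf₀C2 hd₀
  have c₁ := hcont hf₁C2 hd₁
  have c₂ := hcont hf₂C2 hd₂
  have g₀ := hf₀C2.continuousOn
  have g₁ := hf₁C2.continuousOn
  have g₂ := hf₂C2.continuousOn
  have hWc : ContinuousOn (fun t => Aeta f₀' f₁' f₂' η t * Beta f₀ f₁ f₂ η t
      - Aeta f₀ f₁ f₂ η t * Beta f₀' f₁' f₂' η t) (Ico 0 T) := by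
    simp only [Aeta, Beta]
    fun_prop
  obtain ⟨x, hx, hx0⟩ := isPreconnected_Ico.intermediate_value ht h0 hWc
    ⟨hneg, le_of_lt h.2⟩
  exact wronskian_ne_zero hf₀C2 hf₁C2 hf₂C2 hET hd₀ hd₁ hd₂ h.1 hx hx0

/-- `L_H` is open in `ℝ⁶` and its boundary is contained in `L₁`. -/
theorem LH_open_and_boundary_in_L1
    (T : ℝ) (hT : 0 < T) (f₀ f₁ f₂ f₀' f₁' f₂' : ℝ → ℝ)
    (hf₀C2 : ContDiffOn ℝ 2 f₀ (Set.Ico (0:ℝ) T))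
    (hf₁C2 : ContDiffOn ℝ 2 f₁ (Set.Ico (0:ℝ) T))
    (hf₂C2 : ContDiffOn ℝ 2 f₂ (Set.Ico (0:ℝ) T))
    (hf₀c : ContinuousOn f₀ (Set.Icc (0:ℝ) T))
    (hf₁c : ContinuousOn f₁ (Set.Icc (0:ℝ) T))
    (hf₂c : ContinuousOn f₂ (Set.Icc (0:ℝ) T))
    (hET : IsETSystem3 (Set.Ico (0:ℝ) T) f₀ f₁ f₂)
    (hf₀pos : ∀ t ∈ Set.Icc (0:ℝ) T, 0 < f₀ t)
    (hd₀ : ∀ t ∈ Set.Ico (0:ℝ) T, HasDerivWithinAt f₀ (f₀' t) (Set.Ico (0:ℝ) T) t)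
    (hd₁ : ∀ t ∈ Set.Ico (0:ℝ) T, HasDerivWithinAt f₁ (f₁' t) (Set.Ico (0:ℝ) T) t)
    (hd₂ : ∀ t ∈ Set.Ico (0:ℝ) T, HasDerivWithinAt f₂ (f₂' t) (Set.Ico (0:ℝ) T) t) :
    IsOpen (LHset T f₀ f₁ f₂ f₀' f₁' f₂') ∧
    frontier (LHset T f₀ f₁ f₂ f₀' f₁' f₂') ⊆ L1set T f₀ f₁ f₂ := by
  have hW : Continuous fun η : Fin 6 → ℝ => Aeta f₀' f₁' f₂' η 0 * Beta f₀ f₁ f₂ η 0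
      - Aeta f₀ f₁ f₂ η 0 * Beta f₀' f₁' f₂' η 0 := by
    simp only [Aeta, Beta]
    fun_prop
  have heq := LHset_eq hT hf₀C2 hf₁C2 hf₂C2 hET hd₀ hd₁ hd₂
  have hopen : IsOpen (LHset T f₀ f₁ f₂ f₀' f₁' f₂') := by
    rw [heq]
    exact (isClosed_L1set T f₀ f₁ f₂).isOpen_compl.inter (isOpen_lt continuous_const hW)
  refine ⟨hopen, fun η hη => ?_⟩
  by_contra hL
  rw [hopen.frontier_eq] at hη
  have hge := closure_minimal (fun ξ hξ => (hξ.1 0 ⟨le_rfl, hT⟩).le)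
    (isClosed_le continuous_const hW) hη.1
  have hne := wronskian_ne_zero hf₀C2 hf₁C2 hf₂C2 hET hd₀ hd₁ hd₂ hL
    (show (0:ℝ) ∈ Ico 0 T from ⟨le_rfl, hT⟩)
  exact hη.2 (heq ▸ ⟨hL, lt_of_le_of_ne hge hne.symm⟩)
end
end

section
/- Let T > 0, let F = {f₀, f₁, f₂} be an ET-system on [0,T) with each fᵢ continuous on [0,T] and f₀ > 0 on [0,T], and let A, B ∈ span(F) satisfy hypothesis (H): A'(t)B(t) − A(t)B'(t) > 0 on [0,T) and there is no (λ, μ) ≠ (0,0) with λA + μB ≥ 0 on [0,T) or λA + μB ≤ 0 on [0,T). If ∫₀ᵀ B(t) dt = 0, ∫₀ᵀ A(t) dt = 0, and ∫₀ᵀ A(t)(∫₀ᵗ B(s) ds) dt ≠ 0, then the Abel equation x' = A(t)x³ + B(t)x² has no limit cycles in the region x ≠ 0; in fact, it has no non-zero closed solutions. -/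
/-!
Put `a = ∫ A`, `b = ∫ B`. Since `V₂ = V₃ = 0`, the plane curve `(a, b)` is closed on `[0, T]`; since
`A' B - A B' > 0` its tangent turns clockwise, and since no nontrivial combination of `A` and `B`
has more than two zeros, the curve is convex (`chord`).

Let `x` be a closed solution with `x 0 ≠ 0`. It never vanishes (`solution_sign`), and `u = 1 / x`
satisfies `(u + b)' = -A / u`. Near a turning point of `a`, use `a` as independent variable on the
two branches of the curve that meet there. Then `w = u + b` satisfies `dw/da = -1 / (w - b)` on
both branches, with different functions `b`, ordered by convexity. A comparison argument
(`lens`) shows that `w` strictly decreases between two times at which `a` takes the same value,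
if there is exactly one turning point between them.

The function `A` has one or two zeros in `(0, T)`, all of them simple. With one zero, the
comparison applies to `[0, T]`; with two zeros `z < z'`, it applies to `[0, s]` and to `[s, T]`,
where `s` is the time in `(z, z')` with `a s = 0`. In both cases `w T < w 0`, which contradicts
`u 0 = u T` and `b 0 = b T`.
-/

open Set intervalIntegral

noncomputable section

/-! ### One-variable calculus -/

lemma primitive_spec {k : ℝ → ℝ} {p q : ℝ} (hpq : p ≤ q) (hk : ContinuousOn k (Icc p q)) :
    ContinuousOn (fun t => ∫ s in p..t, k s) (Icc p q) ∧
      ∀ t ∈ Ioo p q, HasDerivAt (fun t => ∫ s in p..t, k s) (k t) t := by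
  constructor
  · have h := continuousOn_primitive_interval (μ := MeasureTheory.volume) (f := k) (a := p) (b := q)
      (by rw [uIcc_of_le hpq]; exact hk.integrableOn_Icc)
    rwa [uIcc_of_le hpq] at h
  · intro t ht
    have hn : Icc p q ∈ nhds t := Icc_mem_nhds ht.1 ht.2
    refine integral_hasDerivAt_right ?_ ?_ (hk.continuousAt hn)
    · refine ContinuousOn.intervalIntegrable ?_
      rw [uIcc_of_le ht.1.le]
      exact hk.mono (Icc_subset_Icc_right ht.2.le)
    · exact (hk.mono Ioo_subset_Icc_self).stronglyMeasurableAtFilter isOpen_Ioo t ht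

/-- Comparison with the zero solution of `D' = k D`: multiplying by the integrating factor
`exp (-∫ k)` turns `D' = k D + n`, `n < 0`, into a strict monotonicity statement. -/
lemma pos_of_linear_ode {D k n : ℝ → ℝ} {m M : ℝ} (hmM : m < M)
    (hD : ContinuousOn D (Icc m M)) (hk : ContinuousOn k (Icc m M))
    (hder : ∀ y ∈ Ioo m M, HasDerivAt D (k y * D y + n y) y)
    (hn : ∀ y ∈ Ioo m M, n y < 0) (hM : D M = 0) : 0 < D m := by
  obtain ⟨hKc, hKd⟩ := primitive_spec hmM.le hk
  set K : ℝ → ℝ := fun t => ∫ s in m..t, k s with hK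
  have hanti : StrictAntiOn (fun y => D y * Real.exp (-K y)) (Icc m M) := by
    refine strictAntiOn_of_deriv_neg (convex_Icc m M) (hD.mul (hKc.neg.rexp)) ?_
    intro y hy
    rw [interior_Icc] at hy
    have h := (hder y hy).mul ((hKd y hy).neg.exp)
    have h2 : HasDerivAt (fun y => D y * Real.exp (-K y)) (n y * Real.exp (-K y)) y :=
      h.congr_deriv (by simp only [Pi.neg_apply]; ring)
    rw [h2.deriv]
    exact mul_neg_of_neg_of_pos (hn y hy) (Real.exp_pos _)
  have h := hanti (left_mem_Icc.2 hmM.le) (right_mem_Icc.2 hmM.le) hmM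
  simp only [hM, zero_mul] at h
  exact pos_of_mul_pos_left h (Real.exp_pos _).le

/-- A continuous function with positive derivative on `(l, r)` has an inverse on
`[f l, f r]`, extended here by constants to a continuous function on all of `ℝ`. -/
lemma exists_inverse {f f' : ℝ → ℝ} {l r : ℝ} (hlr : l < r) (hf : ContinuousOn f (Icc l r))
    (hd : ∀ t ∈ Ioo l r, HasDerivAt f (f' t) t) (hpos : ∀ t ∈ Ioo l r, 0 < f' t) :
    f l < f r ∧ ∃ g : ℝ → ℝ, Continuous g ∧ g (f l) = l ∧ g (f r) = r ∧
      (∀ y, g y ∈ Icc l r) ∧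
      ∀ y ∈ Ioo (f l) (f r), g y ∈ Ioo l r ∧ f (g y) = y ∧ HasDerivAt g (f' (g y))⁻¹ y := by
  have hmono : StrictMonoOn f (Icc l r) := by
    refine strictMonoOn_of_deriv_pos (convex_Icc l r) hf ?_
    intro y hy
    rw [interior_Icc] at hy
    rw [(hd y hy).deriv]
    exact hpos y hy
  have hl : l ∈ Icc l r := left_mem_Icc.2 hlr.le
  have hr : r ∈ Icc l r := right_mem_Icc.2 hlr.le
  have hlt : f l < f r := hmono hl hr hlr
  refine ⟨hlt, ?_⟩
  have hivt : ∀ y : Icc (f l) (f r), ∃ x : Icc l r, f x = y := by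
    intro y
    obtain ⟨x, hx, hxy⟩ := intermediate_value_Icc hlr.le hf y.2
    exact ⟨⟨x, hx⟩, hxy⟩
  choose G hG using hivt
  have hGmono : Monotone G := by
    intro y z hyz
    have : f (G y) ≤ f (G z) := by rw [hG, hG]; exact hyz
    exact (hmono.le_iff_le (G y).2 (G z).2).1 this
  have hGf : ∀ x (hx : x ∈ Icc l r) (h : f x ∈ Icc (f l) (f r)), (G ⟨f x, h⟩ : ℝ) = x := by
    intro x hx h
    exact hmono.injOn (G _).2 hx (hG _)
  have hGsurj : Function.Surjective G := by
    intro x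
    have h : f x ∈ Icc (f l) (f r) :=
      ⟨hmono.monotoneOn hl x.2 x.2.1, hmono.monotoneOn x.2 hr x.2.2⟩
    exact ⟨⟨f x, h⟩, Subtype.ext (hGf x x.2 h)⟩
  have hGc : Continuous G := hGmono.continuous_of_surjective hGsurj
  set g : ℝ → ℝ := IccExtend hlt.le (fun y => (G y : ℝ)) with hg
  have hgc : Continuous g := (continuous_subtype_val.comp hGc).Icc_extend'
  have hgl : g (f l) = l := by
    rw [hg, IccExtend_left]; exact hGf l hl _
  have hgr : g (f r) = r := by
    rw [hg, IccExtend_right]; exact hGf r hr _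
  have hfg : ∀ y ∈ Icc (f l) (f r), f (g y) = y := by
    intro y hy
    rw [hg, IccExtend_of_mem _ _ hy]; exact hG _
  have hgm : ∀ y, g y ∈ Icc l r := fun y => (G _).2
  refine ⟨g, hgc, hgl, hgr, hgm, ?_⟩
  intro y hy
  have hy' := Ioo_subset_Icc_self hy
  have hin : g y ∈ Ioo l r := by
    refine ⟨lt_of_le_of_ne (hgm y).1 ?_, lt_of_le_of_ne (hgm y).2 ?_⟩
    · intro h
      have := hfg y hy'
      rw [← h] at this
      exact hy.1.ne this
    · intro h
      have := hfg y hy'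
      rw [h] at this
      exact hy.2.ne' this
  refine ⟨hin, hfg y hy', ?_⟩
  refine HasDerivAt.of_local_left_inverse hgc.continuousAt (hd _ hin) (hpos _ hin).ne' ?_
  filter_upwards [Icc_mem_nhds hy.1 hy.2] with z hz using hfg z hz

/-! ### Comparison of the two branches at a turning point -/

/-- Let `u' = -a'/u - b'`, so that `(u + b)' = -a'/u`. Suppose `a` has a single turning point `β`
between two times `p < q` at which it takes the same value (a maximum or a minimum, according to
the sign of `ε`), and that the two branches of the curve `(a, b)` over `[p, q]` are ordered
clockwise. With `ε a` as independent variable on both branches, the difference of `u + b` along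
the two branches solves a linear equation with negative forcing term and vanishes at the turning
point, hence is positive at the other end. -/
lemma lens {a b u A B : ℝ → ℝ} {p β q ε : ℝ} (hp : p < β) (hq : β < q)
    (ha : ContinuousOn a (Icc p q)) (hb : ContinuousOn b (Icc p q))
    (hu : ContinuousOn u (Icc p q))
    (had : ∀ t ∈ Ioo p q, HasDerivAt a (A t) t) (hbd : ∀ t ∈ Ioo p q, HasDerivAt b (B t) t)
    (hud : ∀ t ∈ Ioo p q, HasDerivAt u (-(A t / u t) - B t) t)
    (husign : ∀ s ∈ Icc p q, ∀ t ∈ Icc p q, 0 < u s * u t)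
    (hup : ∀ t ∈ Ioo p β, 0 < ε * A t) (hdown : ∀ t ∈ Ioo β q, ε * A t < 0)
    (hpq : a p = a q)
    (hmatch : ∀ s ∈ Ioo p β, ∀ t ∈ Ioo β q, a s = a t → A s * (b t - b s) < 0) :
    u q + b q < u p + b p := by
  have hu0 : ∀ t ∈ Icc p q, u t ≠ 0 := fun t ht => left_ne_zero_of_mul (husign t ht t ht).ne'
  have hε : ε ≠ 0 := by
    rintro rfl
    have := hup ((p + β) / 2) ⟨by linarith, by linarith⟩
    simp at this
  have hs1 : ∀ t, t ∈ Icc p β → t ∈ Icc p q := fun t ht => ⟨ht.1, ht.2.trans hq.le⟩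
  have hs2 : ∀ t, t ∈ Icc (-q) (-β) → -t ∈ Icc p q := fun t ht =>
    ⟨by linarith [ht.2], by linarith [ht.1]⟩
  have ho1 : ∀ t, t ∈ Ioo p β → t ∈ Ioo p q := fun t ht => ⟨ht.1, ht.2.trans hq⟩
  have ho2 : ∀ t, t ∈ Ioo (-q) (-β) → -t ∈ Ioo β q := fun t ht =>
    ⟨by linarith [ht.2], by linarith [ht.1]⟩
  have ho2' : ∀ t, t ∈ Ioo β q → t ∈ Ioo p q := fun t ht => ⟨hp.trans ht.1, ht.2⟩
  obtain ⟨hlt, g, hgc, hgl, hgr, hgm, hgi⟩ := exists_inverse (f := fun t => ε * a t)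
    (f' := fun t => ε * A t) hp ((ha.mono hs1).const_mul ε)
    (fun t ht => (had t (ho1 t ht)).const_mul ε) hup
  -- The second branch is traversed backwards in time, so that `ε a` increases along it as well.
  obtain ⟨-, h, hhc, hhl, hhr, hhm, hhi⟩ := exists_inverse (f := fun t => ε * a (-t))
    (f' := fun t => -(ε * A (-t))) (neg_lt_neg hq)
    ((ha.comp continuous_neg.continuousOn hs2).const_mul ε)
    (fun t ht => by
      have h1 := (had (-t) (ho2' _ (ho2 t ht)))
      have h2 := (h1.comp t (hasDerivAt_neg t)).const_mul ε
      exact h2.congr_deriv (by ring))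
    (fun t ht => by
      have := hdown _ (ho2 t ht)
      linarith)
  simp only [neg_neg] at hhl hhr hhi
  rw [← hpq] at hhl hhi
  set m := ε * a p with hm
  set M := ε * a β with hM
  have hm1 : ∀ y, g y ∈ Icc p q := fun y => hs1 _ (hgm y)
  have hm2 : ∀ y, -h y ∈ Icc p q := fun y => hs2 _ (hhm y)
  have cg : ∀ f : ℝ → ℝ, ContinuousOn f (Icc p q) → Continuous fun y => f (g y) :=
    fun f hf => hf.comp_continuous hgc hm1
  have ch : ∀ f : ℝ → ℝ, ContinuousOn f (Icc p q) → Continuous fun y => f (-h y) :=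
    fun f hf => hf.comp_continuous hhc.neg hm2
  have key := pos_of_linear_ode (D := fun y => (u (g y) + b (g y)) - (u (-h y) + b (-h y)))
    (k := fun y => (ε * (u (g y) * u (-h y)))⁻¹)
    (n := fun y => (ε * (u (g y) * u (-h y)))⁻¹ * (b (-h y) - b (g y))) hlt
    ((((cg u hu).add (cg b hb)).sub ((ch u hu).add (ch b hb))).continuousOn)
    ((continuous_const.mul ((cg u hu).mul (ch u hu))).inv₀
      (fun y => mul_ne_zero hε (husign _ (hm1 y) _ (hm2 y)).ne')).continuousOn
    ?_ ?_ ?_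
  · simp only [hgl, hhl, neg_neg] at key
    linarith
  · intro y hy
    obtain ⟨hg1, hg2, hg3⟩ := hgi y hy
    obtain ⟨hh1, hh2, hh3⟩ := hhi y hy
    have e1 := ((hud _ (ho1 _ hg1)).add (hbd _ (ho1 _ hg1))).comp y hg3
    have hh1' := ho2 _ hh1
    have e2 := ((hud _ (ho2' _ hh1')).add (hbd _ (ho2' _ hh1'))).comp y hh3.neg
    refine (e1.sub e2).congr_deriv ?_
    have n1 : A (g y) ≠ 0 := right_ne_zero_of_mul (hup _ hg1).ne'
    have n2 : A (-h y) ≠ 0 := right_ne_zero_of_mul (hdown _ hh1').ne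
    have n3 := hu0 _ (hm1 y)
    have n4 := hu0 _ (hm2 y)
    field_simp
    ring
  · intro y hy
    obtain ⟨hg1, hg2, hg3⟩ := hgi y hy
    obtain ⟨hh1, hh2, hh3⟩ := hhi y hy
    have hmt := hmatch _ hg1 _ (ho2 _ hh1) (mul_left_cancel₀ hε (hg2.trans hh2.symm))
    have h1 := hup _ hg1
    have h2 := husign _ (hm1 y) _ (hm2 y)
    have h3 : ε * (b (-h y) - b (g y)) < 0 := by
      by_contra hc
      push Not at hc
      have : 0 ≤ (ε * A (g y)) * (ε * (b (-h y) - b (g y))) := mul_nonneg h1.le hc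
      have h5 : 0 < ε ^ 2 := by positivity
      nlinarith
    have h4 : (ε * (u (g y) * u (-h y)))⁻¹ * (b (-h y) - b (g y))
        = (ε * (b (-h y) - b (g y))) * (ε ^ 2 * (u (g y) * u (-h y)))⁻¹ := by
      have n3 := hu0 _ (hm1 y)
      have n4 := hu0 _ (hm2 y)
      field_simp
    simp only [h4]
    exact mul_neg_of_neg_of_pos h3 (by positivity)
  · simp only [hgr, hhr, neg_neg, sub_self]

/-! ### Signs and zeros -/

lemma same_sign {g : ℝ → ℝ} {l r : ℝ} (hc : ContinuousOn g (Ioo l r))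
    (hn : ∀ t ∈ Ioo l r, g t ≠ 0) {s t : ℝ} (hs : s ∈ Ioo l r) (ht : t ∈ Ioo l r) :
    0 < g s * g t := by
  by_contra hneg
  have h0 : (0 : ℝ) ∈ uIcc (g s) (g t) := by
    rw [mem_uIcc]
    rcases le_total 0 (g s) with h | h <;> rcases le_total 0 (g t) with h' | h'
    · exfalso
      exact hneg (mul_pos (h.lt_of_ne' (hn s hs)) (h'.lt_of_ne' (hn t ht)))
    · exact Or.inr ⟨h', h⟩
    · exact Or.inl ⟨h, h'⟩
    · exfalso
      exact hneg (mul_pos_of_neg_of_neg (h.lt_of_ne (hn s hs)) (h'.lt_of_ne (hn t ht)))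
  have hsub : uIcc s t ⊆ Ioo l r := ordConnected_Ioo.uIcc_subset hs ht
  obtain ⟨x, hx, hx0⟩ := intermediate_value_uIcc (hc.mono hsub) h0
  exact hn x (hsub hx) hx0

/-- A function has the sign of its derivative immediately after a simple zero, hence up to its
next zero. -/
lemma sign_right {g : ℝ → ℝ} {d z r : ℝ} (hr : z < r) (hc : ContinuousOn g (Ioo z r))
    (hd : HasDerivAt g d z) (hd0 : d ≠ 0) (hz : g z = 0) (hn : ∀ t ∈ Ioo z r, g t ≠ 0) :
    ∀ t ∈ Ioo z r, 0 < d * g t := by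
  intro t ht
  have h := hasDerivAt_iff_tendsto_slope.1 (hd.const_mul d)
  have h1 := (h.mono_left (nhdsGT_le_nhdsNE z)).eventually
    (eventually_gt_nhds (mul_self_pos.2 hd0))
  obtain ⟨s, hs, hsm⟩ := (h1.and (Ioo_mem_nhdsGT hr)).exists
  have hsg : 0 < d * g s := by
    rw [slope_def_field, hz, mul_zero, sub_zero] at hs
    exact (div_pos_iff_of_pos_right (sub_pos.2 hsm.1)).1 hs
  have hss := same_sign hc hn hsm ht
  have : 0 < (d * g s) * (d * g t) := by
    have : 0 < d * d := mul_self_pos.2 hd0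
    nlinarith [mul_pos this hss]
  exact pos_of_mul_pos_right this hsg.le

lemma sign_left {g : ℝ → ℝ} {d l z : ℝ} (hl : l < z) (hc : ContinuousOn g (Ioo l z))
    (hd : HasDerivAt g d z) (hd0 : d ≠ 0) (hz : g z = 0) (hn : ∀ t ∈ Ioo l z, g t ≠ 0) :
    ∀ t ∈ Ioo l z, d * g t < 0 := by
  intro t ht
  have hm : ∀ s ∈ Ioo (-z) (-l), -s ∈ Ioo l z := fun s hs =>
    ⟨by linarith [hs.2], by linarith [hs.1]⟩
  have h := sign_right (g := fun s => g (-s)) (d := -d) (z := -z) (r := -l) (neg_lt_neg hl)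
    (hc.comp continuous_neg.continuousOn hm)
    ((HasDerivAt.comp (-z) (by rw [neg_neg]; exact hd) (hasDerivAt_neg (-z))).congr_deriv (by ring))
    (neg_ne_zero.2 hd0) (by simpa using hz) (fun s hs => hn _ (hm s hs))
    (-t) ⟨by linarith [ht.2], by linarith [ht.1]⟩
  simp only [neg_neg] at h
  linarith

/-! ### Convexity of the curve of primitives -/

/-- The closed curve `(a, b) = (∫ A, ∫ B)` is convex and runs clockwise: if `a` takes the same
value at the times `s < t`, then `(a, b)` at time `t` lies below (above) its position at time `s`
when `a` is increasing (decreasing) at `s`. Here `h3` says that no nontrivial combination of `A`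
and `B` has three zeros on `[0, T)`. -/
lemma chord {A B A' B' : ℝ → ℝ} {T : ℝ}
    (hA : ContinuousOn A (Icc 0 T)) (hB : ContinuousOn B (Icc 0 T))
    (hAd : ∀ t ∈ Ioo 0 T, HasDerivAt A (A' t) t) (hBd : ∀ t ∈ Ioo 0 T, HasDerivAt B (B' t) t)
    (hW : ∀ t ∈ Ioo 0 T, 0 < A' t * B t - A t * B' t)
    (h3 : ∀ l m : ℝ, ¬(l = 0 ∧ m = 0) → ∀ r ∈ Ico 0 T, ∀ s ∈ Ico 0 T, ∀ t ∈ Ico 0 T,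
      r < s → s < t → l * A r + m * B r = 0 → l * A s + m * B s = 0 → l * A t + m * B t ≠ 0)
    (hV2 : ∫ t in (0 : ℝ)..T, B t = 0) (hV3 : ∫ t in (0 : ℝ)..T, A t = 0)
    {s t : ℝ} (hs : 0 < s) (hst : s < t) (ht : t < T)
    (hst0 : ∫ r in (0 : ℝ)..s, A r = ∫ r in (0 : ℝ)..t, A r) (hAs : A s ≠ 0) :
    A s * ((∫ r in (0 : ℝ)..t, B r) - ∫ r in (0 : ℝ)..s, B r) < 0 := by
  -- This combination of `A` and `B` vanishes at `s`, with negative derivative `-(A' B - A B')`.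
  set g : ℝ → ℝ := fun r => -B s * A r + A s * B r with hg
  have hT : 0 < T := hs.trans (hst.trans ht)
  have hsI : s ∈ Ioo 0 T := ⟨hs, hst.trans ht⟩
  have hgc : ContinuousOn g (Icc 0 T) := (hA.const_mul _).add (hB.const_mul _)
  have hint : ∀ f : ℝ → ℝ, ContinuousOn f (Icc 0 T) → ∀ p ∈ Icc 0 T, ∀ q ∈ Icc 0 T,
      IntervalIntegrable f MeasureTheory.volume p q := fun f hf p hp q hq =>
    (hf.mono (ordConnected_Icc.uIcc_subset hp hq)).intervalIntegrable
  have m0 : (0 : ℝ) ∈ Icc 0 T := left_mem_Icc.2 hT.le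
  have mT : T ∈ Icc 0 T := right_mem_Icc.2 hT.le
  have ms : s ∈ Icc 0 T := Ioo_subset_Icc_self hsI
  have mt : t ∈ Icc 0 T := ⟨(hs.trans hst).le, ht.le⟩
  have hgi : ∀ p ∈ Icc 0 T, ∀ q ∈ Icc 0 T,
      ∫ r in p..q, g r = -B s * (∫ r in p..q, A r) + A s * ∫ r in p..q, B r := by
    intro p hp q hq
    rw [hg, integral_add ((hint A hA p hp q hq).const_mul _) ((hint B hB p hp q hq).const_mul _),
      integral_const_mul, integral_const_mul]
  have hAst : ∫ r in s..t, A r = 0 := by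
    have := integral_add_adjacent_intervals (hint A hA 0 m0 s ms) (hint A hA s ms t mt)
    linarith
  have hBst := integral_add_adjacent_intervals (hint B hB 0 m0 s ms) (hint B hB s ms t mt)
  have hgst := hgi s ms t mt
  rw [hAst] at hgst
  by_contra hcon
  push Not at hcon
  have hgst0 : 0 ≤ ∫ r in s..t, g r := by
    rw [hgst, ← hBst] at *
    linarith
  have hg0T : ∫ r in (0 : ℝ)..T, g r = 0 := by
    rw [hgi 0 m0 T mT, hV2, hV3]; ring
  have hgs : g s = 0 := by simp only [hg]; ring
  have hgd : HasDerivAt g (-(A' s * B s - A s * B' s)) s :=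
    (((hAd s hsI).const_mul (-B s)).add ((hBd s hsI).const_mul (A s))).congr_deriv (by ring)
  have hw := hW s hsI
  have hno : ∀ x ∈ Ico 0 T, ∀ y ∈ Ico 0 T, ∀ z ∈ Ico 0 T, x < y → y < z →
      g x = 0 → g y = 0 → g z ≠ 0 := h3 (-B s) (A s) (fun h => hAs h.2)
  have negint : ∀ p ∈ Icc 0 T, ∀ q ∈ Icc 0 T, p < q → (∀ x ∈ Ioo p q, g x < 0) →
      ∫ r in p..q, g r < 0 := by
    intro p hp q hq hpq h
    have := intervalIntegral_pos_of_pos_on (hint g hgc p hp q hq).neg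
      (fun x hx => by have := h x hx; simp only [Pi.neg_apply]; linarith) hpq
    simp only [Pi.neg_apply, integral_neg] at this
    linarith
  have hsub : ∀ {p q : ℝ}, 0 ≤ p → q ≤ T → ContinuousOn g (Ioo p q) := fun hp hq =>
    hgc.mono (Ioo_subset_Icc_self.trans (Icc_subset_Icc hp hq))
  have hmem : ∀ {p x q : ℝ}, 0 ≤ p → q ≤ T → x ∈ Ioo p q → x ∈ Ico 0 T := fun hp hq hx =>
    ⟨hp.trans hx.1.le, hx.2.trans_le hq⟩
  have msI : s ∈ Ico 0 T := ⟨hs.le, hsI.2⟩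
  -- If the claim fails, `g` needs a second zero `r` between `s` and `t`; then `s` and `r` are its
  -- only zeros, the signs of `g` are `+, -, +`, and the integral of `g` over `[0, T]` is positive.
  obtain ⟨r, hr, hgr⟩ : ∃ r ∈ Ioo s t, g r = 0 := by
    by_contra hne
    push Not at hne
    have h := sign_right hst (hsub hs.le ht.le) hgd (by linarith) hgs hne
    have := negint s ms t mt hst (fun x hx => by have := h x hx; nlinarith)
    linarith
  have hrI : r ∈ Ico 0 T := hmem hs.le ht.le hr
  have mr : r ∈ Icc 0 T := Ico_subset_Icc_self hrI
  have h1 := sign_left hs (hsub le_rfl hsI.2.le) hgd (by linarith) hgs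
    (fun x hx h => hno x (hmem le_rfl hsI.2.le hx) s msI r hrI hx.2 hr.1 h hgs hgr)
  have h2 := sign_right hr.1 (hsub hs.le hrI.2.le) hgd (by linarith) hgs
    (fun x hx h => hno s msI x (hmem hs.le hrI.2.le hx) r hrI hx.1 hx.2 hgs h hgr)
  have hrn : ∀ x ∈ Ioo r T, g x ≠ 0 := fun x hx =>
    hno s msI r hrI x (hmem hrI.1 le_rfl hx) hr.1 hx.1 hgs hgr
  have i1 : 0 < ∫ x in (0 : ℝ)..s, g x := intervalIntegral_pos_of_pos_on
    (hint g hgc 0 m0 s ms) (fun x hx => by have := h1 x hx; nlinarith) hs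
  have i2 := negint s ms r mr hr.1 (fun x hx => by have := h2 x hx; nlinarith)
  have e1 := integral_add_adjacent_intervals (hint g hgc s ms r mr) (hint g hgc r mr t mt)
  have e2 := integral_add_adjacent_intervals (hint g hgc 0 m0 s ms) (hint g hgc s ms t mt)
  have e3 := integral_add_adjacent_intervals (hint g hgc 0 m0 t mt) (hint g hgc t mt T mT)
  have htm : t ∈ Ioo r T := ⟨hr.2, ht⟩
  rcases lt_or_ge (g t) 0 with hneg | hge
  · have := negint r mr t mt hr.2 (fun x hx => by
      have := same_sign (hsub hrI.1 le_rfl) hrn htm ⟨hx.1, hx.2.trans ht⟩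
      nlinarith)
    linarith
  · have hpos : 0 < g t := hge.lt_of_ne' (hrn t htm)
    have : 0 < ∫ x in t..T, g x := intervalIntegral_pos_of_pos_on (hint g hgc t mt T mT)
      (fun x hx => by
        have := same_sign (hsub hrI.1 le_rfl) hrn htm ⟨hr.2.trans hx.1, hx.2⟩
        exact pos_of_mul_pos_right this hpos.le) ht
    linarith

/-! ### Solutions of the Abel equation -/

/-- A solution with non-zero initial value never vanishes, as it solves the linear equation
`x' = (A x² + B x) x`. -/
lemma solution_sign {A B x : ℝ → ℝ} {T : ℝ} (hT : 0 < T)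
    (hA : ContinuousOn A (Icc 0 T)) (hB : ContinuousOn B (Icc 0 T))
    (hx : ∀ t ∈ Icc 0 T, HasDerivWithinAt x (A t * x t ^ 3 + B t * x t ^ 2) (Icc 0 T) t)
    (hx0 : x 0 ≠ 0) : ∀ t ∈ Icc 0 T, 0 < x 0 * x t := by
  have hxc : ContinuousOn x (Icc 0 T) := fun t ht => (hx t ht).continuousWithinAt
  have hk : ContinuousOn (fun t => A t * x t ^ 2 + B t * x t) (Icc 0 T) :=
    (hA.mul (hxc.pow 2)).add (hB.mul hxc)
  obtain ⟨hKc, hKd⟩ := primitive_spec hT.le hk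
  set K : ℝ → ℝ := fun t => ∫ s in (0 : ℝ)..t, (A s * x s ^ 2 + B s * x s) with hK
  intro t ht
  have hconst : x t * Real.exp (-K t) = x 0 * Real.exp (-K 0) := by
    rcases ht.1.eq_or_lt with h0 | h0
    · rw [← h0]
    · obtain ⟨c, hc, hc0⟩ := exists_hasDerivAt_eq_slope (fun r => x r * Real.exp (-K r))
        (fun _ => 0) h0 ((hxc.mul hKc.neg.rexp).mono (Icc_subset_Icc_right ht.2))
        (fun r hr => by
          have hr' : r ∈ Ioo 0 T := ⟨hr.1, hr.2.trans_le ht.2⟩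
          have h1 := (hx r (Ioo_subset_Icc_self hr')).hasDerivAt (Icc_mem_nhds hr'.1 hr'.2)
          exact (h1.mul (hKd r hr').neg.exp).congr_deriv (by simp only [Pi.neg_apply]; ring))
      have := (div_eq_zero_iff.1 hc0.symm).resolve_right (by linarith)
      linarith
  have : x 0 * x t = (x 0) ^ 2 * Real.exp (-K 0) * Real.exp (K t) := by
    have e : Real.exp (-K t) * Real.exp (K t) = 1 := by rw [← Real.exp_add]; simp
    linear_combination (x 0 * Real.exp (K t)) * hconst - x 0 * x t * e
  rw [this]
  positivity

/-! ### The absence of non-zero closed solutions -/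

/-- Under hypothesis (H), if `V₂ = ∫₀ᵀ B = 0`, `V₃ = ∫₀ᵀ A = 0` and
`V₄ = ∫₀ᵀ A(t)(∫₀ᵗ B) dt ≠ 0`, then the Abel equation has no non-zero closed solutions
(in particular, no limit cycles in the region `x ≠ 0`). -/
theorem abel_H_V2_V3_zero_V4_nonzero_no_nonzero_closed
    (T : ℝ) (hT : 0 < T) (f₀ f₁ f₂ : ℝ → ℝ)
    (hf₀C2 : ContDiffOn ℝ 2 f₀ (Set.Ico (0:ℝ) T))
    (hf₁C2 : ContDiffOn ℝ 2 f₁ (Set.Ico (0:ℝ) T))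
    (hf₂C2 : ContDiffOn ℝ 2 f₂ (Set.Ico (0:ℝ) T))
    (hf₀c : ContinuousOn f₀ (Set.Icc (0:ℝ) T))
    (hf₁c : ContinuousOn f₁ (Set.Icc (0:ℝ) T))
    (hf₂c : ContinuousOn f₂ (Set.Icc (0:ℝ) T))
    (hET : IsETSystem3 (Set.Ico (0:ℝ) T) f₀ f₁ f₂)
    (hf₀pos : ∀ t ∈ Set.Icc (0:ℝ) T, 0 < f₀ t)
    (A B A' B' : ℝ → ℝ)
    (hA : ∃ a b c : ℝ, A = fun t => a * f₀ t + b * f₁ t + c * f₂ t)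
    (hB : ∃ a b c : ℝ, B = fun t => a * f₀ t + b * f₁ t + c * f₂ t)
    (hA' : ∀ t ∈ Set.Ico (0:ℝ) T, HasDerivWithinAt A (A' t) (Set.Ico (0:ℝ) T) t)
    (hB' : ∀ t ∈ Set.Ico (0:ℝ) T, HasDerivWithinAt B (B' t) (Set.Ico (0:ℝ) T) t)
    (hH1 : ∀ t ∈ Set.Ico (0:ℝ) T, 0 < A' t * B t - A t * B' t)
    (hH2 : ¬∃ l m : ℝ, ¬(l = 0 ∧ m = 0) ∧
        ((∀ t ∈ Set.Ico (0:ℝ) T, 0 ≤ l * A t + m * B t) ∨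
         (∀ t ∈ Set.Ico (0:ℝ) T, l * A t + m * B t ≤ 0)))
    (hV2 : (∫ t in (0:ℝ)..T, B t) = 0)
    (hV3 : (∫ t in (0:ℝ)..T, A t) = 0)
    (hV4 : (∫ t in (0:ℝ)..T, A t * ∫ s in (0:ℝ)..t, B s) ≠ 0) :
    ∀ x : ℝ → ℝ, ClosedSol A B T x → x 0 = 0 := by
  intro x hx
  by_contra hx0
  obtain ⟨hsol, hclosed⟩ := hx
  have hAc : ContinuousOn A (Icc 0 T) := by
    obtain ⟨a, b, c, rfl⟩ := hA
    exact ((hf₀c.const_mul a).add (hf₁c.const_mul b)).add (hf₂c.const_mul c)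
  have hBc : ContinuousOn B (Icc 0 T) := by
    obtain ⟨a, b, c, rfl⟩ := hB
    exact ((hf₀c.const_mul a).add (hf₁c.const_mul b)).add (hf₂c.const_mul c)
  have h3 : ∀ l m : ℝ, ¬(l = 0 ∧ m = 0) → ∀ r ∈ Ico 0 T, ∀ s ∈ Ico 0 T, ∀ t ∈ Ico 0 T,
      r < s → s < t → l * A r + m * B r = 0 → l * A s + m * B s = 0 →
        l * A t + m * B t ≠ 0 := by
    intro l m hlm r hr s hs t ht hrs hst er es et
    obtain ⟨a, b, c, hAeq⟩ := hA
    obtain ⟨a', b', c', hBeq⟩ := hB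
    have hcomb : ∀ y, (l * a + m * a') * f₀ y + (l * b + m * b') * f₁ y
        + (l * c + m * c') * f₂ y = l * A y + m * B y := by
      intro y
      rw [hAeq, hBeq]
      ring
    -- By (H), a nontrivial combination of `A` and `B` is not identically zero.
    have hnt : ¬(l * a + m * a' = 0 ∧ l * b + m * b' = 0 ∧ l * c + m * c' = 0) := by
      rintro ⟨e1, e2, e3⟩
      refine hH2 ⟨l, m, hlm, Or.inl fun y _ => ?_⟩
      rw [← hcomb y, e1, e2, e3]
      simp
    have h := hET.2 _ _ _ hnt {r, s, t} (fun _ => 1) (by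
      intro y hy
      simp only [Finset.mem_insert, Finset.mem_singleton] at hy
      have hy' : y ∈ Ico 0 T ∧ l * A y + m * B y = 0 := by
        rcases hy with rfl | rfl | rfl
        · exact ⟨hr, er⟩
        · exact ⟨hs, es⟩
        · exact ⟨ht, et⟩
      refine ⟨hy'.1, le_rfl, ?_⟩
      intro k hk
      obtain rfl : k = 0 := by omega
      rw [iteratedDerivWithin_zero, hcomb y]
      exact hy'.2)
    rw [Finset.sum_const, Finset.card_eq_three.2 ⟨r, s, t, hrs.ne, (hrs.trans hst).ne, hst.ne, rfl⟩]
      at h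
    norm_num at h
  have hIco : ∀ t ∈ Ioo 0 T, Ico 0 T ∈ nhds t := fun t ht => Ico_mem_nhds ht.1 ht.2
  have hAd : ∀ t ∈ Ioo 0 T, HasDerivAt A (A' t) t := fun t ht =>
    (hA' t (Ioo_subset_Ico_self ht)).hasDerivAt (hIco t ht)
  have hBd : ∀ t ∈ Ioo 0 T, HasDerivAt B (B' t) t := fun t ht =>
    (hB' t (Ioo_subset_Ico_self ht)).hasDerivAt (hIco t ht)
  have hW : ∀ t ∈ Ioo 0 T, 0 < A' t * B t - A t * B' t := fun t ht =>
    hH1 t (Ioo_subset_Ico_self ht)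
  obtain ⟨hac, had⟩ := primitive_spec hT.le hAc
  obtain ⟨hbc, hbd⟩ := primitive_spec hT.le hBc
  have hchord : ∀ s t, 0 < s → s < t → t < T →
      ∫ r in (0 : ℝ)..s, A r = ∫ r in (0 : ℝ)..t, A r → A s ≠ 0 →
      A s * ((∫ r in (0 : ℝ)..t, B r) - ∫ r in (0 : ℝ)..s, B r) < 0 :=
    fun s t hs hst ht h hAs => chord hAc hBc hAd hBd hW h3 hV2 hV3 hs hst ht h hAs
  set a : ℝ → ℝ := fun t => ∫ r in (0 : ℝ)..t, A r with ha
  set b : ℝ → ℝ := fun t => ∫ r in (0 : ℝ)..t, B r with hb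
  have ha0 : a 0 = 0 := integral_same
  have hb0 : b 0 = 0 := integral_same
  have haT : a T = 0 := hV3
  have hbT : b T = 0 := hV2
  have hxs := solution_sign hT hAc hBc hsol hx0
  have hxn : ∀ t ∈ Icc 0 T, x t ≠ 0 := fun t ht => right_ne_zero_of_mul (hxs t ht).ne'
  set u : ℝ → ℝ := fun t => (x t)⁻¹ with hu
  have huc : ContinuousOn u (Icc 0 T) :=
    ContinuousOn.inv₀ (fun t ht => (hsol t ht).continuousWithinAt) hxn
  have hud : ∀ t ∈ Ioo 0 T, HasDerivAt u (-(A t / u t) - B t) t := by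
    intro t ht
    have ht' := Ioo_subset_Icc_self ht
    have h := ((hsol t ht').hasDerivAt (Icc_mem_nhds ht.1 ht.2)).inv (hxn t ht')
    refine h.congr_deriv ?_
    have := hxn t ht'
    simp only [hu]
    field_simp
    ring
  have hus : ∀ s ∈ Icc 0 T, ∀ t ∈ Icc 0 T, 0 < u s * u t := by
    intro s hs t ht
    have h : 0 < x s * x t := by
      have h1 := mul_pos (hxs s hs) (hxs t ht)
      have h2 : 0 < x 0 ^ 2 := by positivity
      refine pos_of_mul_pos_right (a := x 0 ^ 2) ?_ h2.le
      linarith [show x 0 ^ 2 * (x s * x t) = x 0 * x s * (x 0 * x t) by ring]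
    simp only [hu]
    rw [← mul_inv]
    exact inv_pos.2 h
  have huT : u 0 = u T := by simp only [hu, hclosed]
  have hlens : ∀ p β q ε : ℝ, 0 ≤ p → p < β → β < q → q ≤ T →
      (∀ t ∈ Ioo p β, 0 < ε * A t) → (∀ t ∈ Ioo β q, ε * A t < 0) → a p = a q →
      u q + b q < u p + b p := by
    intro p β q ε h0 hp hq hqT hup hdown hpq
    have hs : Icc p q ⊆ Icc 0 T := Icc_subset_Icc h0 hqT
    have ho : Ioo p q ⊆ Ioo 0 T := Ioo_subset_Ioo h0 hqT
    exact lens hp hq (hac.mono hs) (hbc.mono hs) (huc.mono hs)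
      (fun t ht => had t (ho ht)) (fun t ht => hbd t (ho ht)) (fun t ht => hud t (ho ht))
      (fun s hs' t ht => hus s (hs hs') t (hs ht)) hup hdown hpq
      (fun s hs' t ht h => hchord s t (h0.trans_lt hs'.1) (hs'.2.trans ht.1) (ht.2.trans_le hqT) h
        (right_ne_zero_of_mul (hup s hs').ne'))
  have hsimple : ∀ z ∈ Ioo 0 T, A z = 0 → A' z ≠ 0 := by
    intro z hz h h'
    have := hW z hz
    rw [h, h'] at this
    simp at this
  have hsubc : ∀ {p q : ℝ}, 0 ≤ p → q ≤ T → ContinuousOn A (Ioo p q) := fun hp hq =>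
    hAc.mono (Ioo_subset_Icc_self.trans (Icc_subset_Icc hp hq))
  -- Two zeros of `A` in `(0, T)` are impossible.
  have htwo : ∀ z z' : ℝ, 0 < z → z < z' → z' < T → A z = 0 → A z' = 0 → False := by
    intro z z' hz hzz hz' e e'
    have mz : z ∈ Ioo 0 T := ⟨hz, hzz.trans hz'⟩
    have mz' : z' ∈ Ioo 0 T := ⟨hz.trans hzz, hz'⟩
    have hno : ∀ p ∈ Ico 0 T, ∀ q ∈ Ico 0 T, ∀ r ∈ Ico 0 T, p < q → q < r →
        A p = 0 → A q = 0 → A r ≠ 0 := by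
      intro p hp q hq r hr hpq hqr h1 h2
      simpa using h3 1 0 (by simp) p hp q hq r hr hpq hqr (by simpa using h1) (by simpa using h2)
    have iz : z ∈ Ico 0 T := Ioo_subset_Ico_self mz
    have iz' : z' ∈ Ico 0 T := Ioo_subset_Ico_self mz'
    have n1 : ∀ t ∈ Ioo 0 z, A t ≠ 0 := fun t ht h =>
      hno t ⟨ht.1.le, ht.2.trans mz.2⟩ z iz z' iz' ht.2 hzz h e e'
    have n2 : ∀ t ∈ Ioo z z', A t ≠ 0 := fun t ht h =>
      hno z iz t ⟨(hz.trans ht.1).le, ht.2.trans hz'⟩ z' iz' ht.1 ht.2 e h e'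
    have n3 : ∀ t ∈ Ioo z' T, A t ≠ 0 := fun t ht =>
      hno z iz z' iz' t ⟨(mz'.1.trans ht.1).le, ht.2⟩ hzz ht.1 e e'
    have s1 := sign_left hz (hsubc le_rfl mz.2.le) (hAd z mz) (hsimple z mz e) e n1
    have s2 := sign_right hzz (hsubc hz.le hz'.le) (hAd z mz) (hsimple z mz e) e n2
    have s3 := sign_left hzz (hsubc hz.le hz'.le) (hAd z' mz') (hsimple z' mz' e') e' n2
    have s4 := sign_right hz' (hsubc mz'.1.le le_rfl) (hAd z' mz') (hsimple z' mz' e') e' n3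
    have i1 := (exists_inverse (f := fun t => -A' z * a t) (f' := fun t => -A' z * A t) hz
      ((hac.mono (Icc_subset_Icc_right mz.2.le)).const_mul _)
      (fun t ht => (had t ⟨ht.1, ht.2.trans mz.2⟩).const_mul _)
      (fun t ht => by linarith [s1 t ht])).1
    have i2 := (exists_inverse (f := fun t => A' z' * a t) (f' := fun t => A' z' * A t) hz'
      ((hac.mono (Icc_subset_Icc_left mz'.1.le)).const_mul _)
      (fun t ht => (had t ⟨mz'.1.trans ht.1, ht.2⟩).const_mul _)
      (fun t ht => s4 t ht)).1
    simp only [ha0, haT, mul_zero] at i1 i2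
    -- `a` has opposite signs at `z` and `z'`, because `A'` has.
    have hopp : A' z * A' z' < 0 := by
      have mm : (z + z') / 2 ∈ Ioo z z' := ⟨by linarith, by linarith⟩
      have h1 := s2 _ mm
      have h2 := s3 _ mm
      have h5 : 0 < A ((z + z') / 2) ^ 2 := by have := n2 _ mm; positivity
      by_contra hc
      push Not at hc
      nlinarith [mul_neg_of_pos_of_neg h1 h2, mul_nonneg hc h5.le]
    have i3 : 0 < A' z * a z' := by
      have h5 : 0 < A' z' ^ 2 := by have := hsimple z' mz' e'; positivity
      by_contra hc
      push Not at hc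
      nlinarith [mul_pos_of_neg_of_neg hopp i2, mul_nonneg (neg_nonneg.2 hc) h5.le]
    obtain ⟨s, hs, hs0⟩ := intermediate_value_Ioo (f := fun t => A' z * a t) hzz.le
      ((hac.mono (Icc_subset_Icc hz.le hz'.le)).const_mul _) ⟨by linarith, i3⟩
    have has : a s = 0 := (mul_eq_zero.1 hs0).resolve_left (hsimple z mz e)
    have l1 := hlens 0 z s (-A' z) le_rfl hz hs.1 (hs.2.trans hz').le
      (fun t ht => by linarith [s1 t ht])
      (fun t ht => by linarith [s2 t ⟨ht.1, ht.2.trans hs.2⟩]) (by rw [ha0, has])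
    have l2 := hlens s z' T (-A' z') (hz.trans hs.1).le hs.2 hz' le_rfl
      (fun t ht => by linarith [s3 t ⟨hs.1.trans ht.1, ht.2⟩])
      (fun t ht => by linarith [s4 t ht]) (by rw [haT, has])
    linarith
  obtain ⟨z, hz, e⟩ := exists_hasDerivAt_eq_zero hT hac (by rw [ha0, haT]) had
  have n1 : ∀ t ∈ Ioo 0 z, A t ≠ 0 := fun t ht h => htwo t z ht.1 ht.2 hz.2 h e
  have n2 : ∀ t ∈ Ioo z T, A t ≠ 0 := fun t ht h => htwo z t hz.1 ht.1 ht.2 e h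
  have s1 := sign_left hz.1 (hsubc le_rfl hz.2.le) (hAd z hz) (hsimple z hz e) e n1
  have s2 := sign_right hz.2 (hsubc hz.1.le le_rfl) (hAd z hz) (hsimple z hz e) e n2
  have l := hlens 0 z T (-A' z) le_rfl hz.1 hz.2 le_rfl
    (fun t ht => by linarith [s1 t ht]) (fun t ht => by linarith [s2 t ht]) (by rw [ha0, haT])
  linarith
end
end
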